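/- arXiv:2506.08816 — 2 statements merged into one kernel-verified Lean document; each statement's English description precedes it below -/
import Mathlib

section
/- Let d ∈ ℕ and let (X_i)_{i∈ℕ} be a strictly stationary sequence of S_d-valued random vectors with marginal density f on S_d satisfying (A2) (for some p ∈ (2,∞), sup_{i≠j} ‖h_{i,j}‖_p < ∞, where h_{i,j} = f_{X_i,X_j} − f_{X_i} f_{X_j}), (A3) (α(m) ≪ m^{−ν} for some ν > max{2(p−1)/(p−2), (d+4)/2}), (A4) f Lipschitz continuous, and (A5) b = b(n) → 0, n b^{d/2} → ∞, n^{1/2} b^{d/4+1/2} → 0. Fix s ∈ Int(S_d). Let (p_n), (q_n) be positive integer sequences diverging to ∞ with k_n = ⌊n/(p_n+q_n)⌋ → ∞ such that: (a) k_n q_n/n → 0; (b) p_n/(p_n+q_n) → 1; (c) k_n q_n² n^{−1} b^{−d/2}/(p_n+q_n)^ν → 0; (d) k_n/q_n^ν → 0; (e) p_n/(n^{1/2} b^{d/4}) → 0. Set Ξ_{i,n}(s) = κ_{s,b}(X_i) − E{κ_{s,b}(X_i)} and S_{1,n}(s) = Σ_{j=1}^{k_n} U_j(s), where U_j(s) =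 Σ_{i ∈ I_j} Ξ_{i,n}(s) and I_j = {(j−1)(p_n+q_n)+1, …, (j−1)(p_n+q_n)+p_n}. Then n^{−1/2} b^{d/4} S_{1,n}(s) converges in distribution to N(0, ψ(s) f(s)) as n → ∞. -/
open MeasureTheory Filter Asymptotics Real Topology

noncomputable section

/-- The `d`-dimensional simplex `S_d = {s ∈ [0,1]^d : ‖s‖₁ ≤ 1}`. -/
def Sd (d : ℕ) : Set (Fin d → ℝ) :=
  {s | (∀ i, s i ∈ Set.Icc (0 : ℝ) 1) ∧ ∑ i, |s i| ≤ 1}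

/-- The interior of the simplex, `Int(S_d) = {s ∈ (0,1)^d : ‖s‖₁ < 1}`. -/
def SdInt (d : ℕ) : Set (Fin d → ℝ) :=
  {s | (∀ i, s i ∈ Set.Ioo (0 : ℝ) 1) ∧ ∑ i, |s i| < 1}

/-- The Dirichlet(u, v) density on the simplex, evaluated at `x`. -/
def dirK (d : ℕ) (u : Fin d → ℝ) (v : ℝ) (x : Fin d → ℝ) : ℝ :=
  (Real.Gamma (∑ i, u i + v) / (Real.Gamma v * ∏ i, Real.Gamma (u i))) *
    (1 - ∑ i, x i) ^ (v - 1) * ∏ i, (x i) ^ (u i - 1)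

/-- The Dirichlet kernel `κ_{s,b} = K_{s/b+1, (1-‖s‖₁)/b+1}`. -/
def kappa (d : ℕ) (s : Fin d → ℝ) (b : ℝ) (x : Fin d → ℝ) : ℝ :=
  dirK d (fun i => s i / b + 1) ((1 - ∑ i, s i) / b + 1) x

/-- `ψ(s) = (4π)^{-d/2} / ((1-‖s‖₁)^{1/2} ∏ s_i^{1/2})`. -/
def psiFun (d : ℕ) (s : Fin d → ℝ) : ℝ :=
  (4 * π) ^ (-(d : ℝ) / 2) /
    ((1 - ∑ i, s i) ^ ((1 : ℝ) / 2) * ∏ i, (s i) ^ ((1 : ℝ) / 2))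

/-- The Dirichlet kernel density estimator `f̂_{n,b}(s)`. -/
def fhat {Ω : Type*} (d n : ℕ) (b : ℝ) (X : ℕ → Ω → (Fin d → ℝ))
    (s : Fin d → ℝ) (ω : Ω) : ℝ :=
  (n : ℝ)⁻¹ * ∑ i ∈ Finset.Icc 1 n, kappa d s b (X i ω)

/-- The strong mixing (α-mixing) coefficient of the sequence `X`. -/
def alphaMix {Ω : Type*} [MeasurableSpace Ω] (P : Measure Ω)
    {d : ℕ} (X : ℕ → Ω → (Fin d → ℝ)) (m : ℕ) : ℝ :=
  sSup {r : ℝ | ∃ k : ℕ, 1 ≤ k ∧ ∃ A B : Set Ω,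
    MeasurableSet[⨆ i ∈ Set.Icc 1 k, MeasurableSpace.comap (X i) inferInstance] A ∧
    MeasurableSet[⨆ i ∈ Set.Ici (k + m), MeasurableSpace.comap (X i) inferInstance] B ∧
    r = |(P (A ∩ B)).toReal - (P A).toReal * (P B).toReal|}

/-- Strict stationarity of the sequence `X` (indexed from 1). -/
def IsStrictlyStationary {Ω : Type*} [MeasurableSpace Ω] (P : Measure Ω)
    {d : ℕ} (X : ℕ → Ω → (Fin d → ℝ)) : Prop :=
  ∀ k n : ℕ,
    Measure.map (fun ω => fun t : Fin n => X (t.1 + 1 + k) ω) P =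
      Measure.map (fun ω => fun t : Fin n => X (t.1 + 1) ω) P

/-- Covariance of two real random variables. -/
def cov {Ω : Type*} [MeasurableSpace Ω] (P : Measure Ω) (Y Z : Ω → ℝ) : ℝ :=
  ∫ ω, Y ω * Z ω ∂P - (∫ ω, Y ω ∂P) * (∫ ω, Z ω ∂P)

/-- The bias functional `g(s)` from Theorem MSE. -/
def gfun (d : ℕ) (f : (Fin d → ℝ) → ℝ) (s : Fin d → ℝ) : ℝ :=
  (∑ i, (1 - ((d : ℝ) + 1) * s i) * fderiv ℝ f s (Pi.single i 1)) +
    (1 / 2) * ∑ i, ∑ j, s i * ((if i = j then (1 : ℝ) else 0) - s j) *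
      fderiv ℝ (fun t => fderiv ℝ f t (Pi.single i 1)) s (Pi.single j 1)

/-- The centered kernel variable `Ξ_{i,n}(s)`. -/
def Xi {Ω : Type*} [MeasurableSpace Ω] (P : Measure Ω) {d : ℕ}
    (X : ℕ → Ω → (Fin d → ℝ)) (s : Fin d → ℝ) (b : ℝ) (i : ℕ) (ω : Ω) : ℝ :=
  kappa d s b (X i ω) - ∫ ω', kappa d s b (X i ω') ∂P

/-- The `j`-th big block of indices `I_j`. -/
def bigBlock (pn qn j : ℕ) : Finset ℕ :=
  Finset.Icc ((j - 1) * (pn + qn) + 1) ((j - 1) * (pn + qn) + pn)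

/-- The `j`-th small block of indices `J_j`. -/
def smallBlock (pn qn j : ℕ) : Finset ℕ :=
  Finset.Icc ((j - 1) * (pn + qn) + pn + 1) (j * (pn + qn))

/-- Assumption (A2): pairwise joint densities exist and the local dependence
functions `h_{i,j} = f_{X_i,X_j} - f_{X_i} f_{X_j}` have uniformly bounded `L^p` norms. -/
def AssumpA2 {Ω : Type*} [MeasurableSpace Ω] (P : Measure Ω) {d : ℕ}
    (X : ℕ → Ω → (Fin d → ℝ)) (f : (Fin d → ℝ) → ℝ) (p : ℝ) : Prop :=
  ∃ fpair : ℕ → ℕ → ((Fin d → ℝ) × (Fin d → ℝ)) → ℝ,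
    (∀ i j : ℕ, 1 ≤ i → 1 ≤ j → i ≠ j →
      Measure.map (fun ω => (X i ω, X j ω)) P =
        volume.withDensity (fun z => ENNReal.ofReal (fpair i j z))) ∧
    (∀ i j : ℕ, 1 ≤ i → 1 ≤ j → i ≠ j →
      Integrable (fun z => |fpair i j z - f z.1 * f z.2| ^ p)
        (volume.restrict (Sd d ×ˢ Sd d))) ∧
    ∃ C : ℝ, ∀ i j : ℕ, 1 ≤ i → 1 ≤ j → i ≠ j →
      (∫ z in Sd d ×ˢ Sd d, |fpair i j z - f z.1 * f z.2| ^ p) ^ (1 / p) ≤ C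

/-- Stirling ratio `R(z) = √(2π) e^{-z} z^{z+1/2} / Γ(z+1)`. -/
def Rfun (z : ℝ) : ℝ :=
  Real.sqrt (2 * π) * Real.exp (-z) * z ^ (z + 1 / 2) / Real.Gamma (z + 1)

end

namespace BB

lemma beta_scaled {a c r : ℝ} (ha : 0 < a) (hc : 0 < c) (hr : 0 < r) :
    ∫⁻ x in Set.Ioo 0 r, ENNReal.ofReal (x ^ (a - 1) * (r - x) ^ (c - 1)) =
      ENNReal.ofReal (r ^ (a + c - 1) * (Gamma a * Gamma c / Gamma (a + c))) := by
  rw [← lintegral_indicator measurableSet_Ioo]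
  have hm : Measurable (Set.indicator (Set.Ioo 0 r)
      fun x : ℝ => ENNReal.ofReal (x ^ (a - 1) * (r - x) ^ (c - 1))) :=
    Measurable.indicator (by fun_prop) measurableSet_Ioo
  rw [← Real.smul_map_volume_mul_left hr.ne', lintegral_smul_measure,
    lintegral_map hm (by fun_prop)]
  have hB := ProbabilityTheory.beta_pos ha hc
  have : ∀ y : ℝ, Set.indicator (Set.Ioo 0 r)
      (fun x : ℝ => ENNReal.ofReal (x ^ (a - 1) * (r - x) ^ (c - 1))) (r * y) =
      ENNReal.ofReal (r ^ (a + c - 2) * ProbabilityTheory.beta a c) *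
        ProbabilityTheory.betaPDF a c y := by
    intro y
    by_cases hy : 0 < y ∧ y < 1
    · have h1 : r * y ∈ Set.Ioo 0 r := ⟨by have := hy.1; positivity, by nlinarith [hy.2]⟩
      rw [Set.indicator_of_mem h1, ProbabilityTheory.betaPDF_of_pos_lt_one hy.1 hy.2,
        ← ENNReal.ofReal_mul (by positivity)]
      congr 1
      have h2 : r - r * y = r * (1 - y) := by ring
      rw [h2, Real.mul_rpow hr.le hy.1.le, Real.mul_rpow hr.le (by linarith [hy.2])]
      have h3 : r ^ (a + c - 2) = r ^ (a - 1) * r ^ (c - 1) := by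
        rw [← Real.rpow_add hr]; congr 1; ring
      rw [h3]
      field_simp
    · have h1 : r * y ∉ Set.Ioo 0 r := by
        intro h
        apply hy
        exact ⟨by have := h.1; exact pos_of_mul_pos_right this hr.le, by
          have := h.2; by_contra hcon; nlinarith⟩
      rw [Set.indicator_of_notMem h1, ProbabilityTheory.betaPDF_eq, if_neg hy]
      simp
  simp_rw [this]
  rw [lintegral_const_mul _ (by exact (ProbabilityTheory.measurable_betaPDFReal a c).ennreal_ofReal),
    ProbabilityTheory.lintegral_betaPDF_eq_one ha hc, mul_one, smul_eq_mul,
    ← ENNReal.ofReal_mul (abs_nonneg _), abs_of_pos hr]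
  congr 1
  have h3 : r ^ (a + c - 1) = r * r ^ (a + c - 2) := by
    conv_rhs => rw [← Real.rpow_one r, ← Real.rpow_mul hr.le, one_mul, ← Real.rpow_add hr]
    congr 1; ring
  rw [h3, ProbabilityTheory.beta]; ring

def Osimp (d : ℕ) (r : ℝ) : Set (Fin d → ℝ) := {x | (∀ i, 0 < x i) ∧ ∑ i, x i < r}

lemma measurableSet_Osimp (d : ℕ) (r : ℝ) : MeasurableSet (Osimp d r) := by
  have : Osimp d r = (⋂ i, {x : Fin d → ℝ | 0 < x i}) ∩ {x | ∑ i, x i < r} := by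
    ext x; simp [Osimp]
  rw [this]
  exact (MeasurableSet.iInter fun i => measurableSet_lt measurable_const (measurable_pi_apply i)).inter
    (measurableSet_lt (by fun_prop) measurable_const)

lemma dirichlet_lintegral (d : ℕ) : ∀ (u : Fin d → ℝ) (v r : ℝ), (∀ i, 0 < u i) → 0 < v → 0 < r →
    ∫⁻ x in Osimp d r, ENNReal.ofReal ((r - ∑ i, x i) ^ (v - 1) * ∏ i, (x i) ^ (u i - 1)) =
      ENNReal.ofReal (r ^ (∑ i, u i + v - 1) * (Gamma v * ∏ i, Gamma (u i)) / Gamma (∑ i, u i + v)) := by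
  induction d with
  | zero =>
    intro u v r hu hv hr
    have h1 : Osimp 0 r = Set.univ := by ext x; simp [Osimp, hr]
    have h2 := (Gamma_pos_of_pos hv).ne'
    rw [h1, Measure.restrict_univ]
    simp [volume_pi]
    congr 1
    field_simp
  | succ n ih =>
    intro u v r hu hv hr
    have hm : ∀ (m : ℕ) (u : Fin m → ℝ) (r : ℝ), Measurable fun x : Fin m → ℝ =>
        ENNReal.ofReal ((r - ∑ i, x i) ^ (v - 1) * ∏ i, (x i) ^ (u i - 1)) := by
      intro m u r
      fun_prop
    rw [← lintegral_indicator (measurableSet_Osimp _ _)]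
    have hmp := (volume_preserving_piFinSuccAbove (fun _ : Fin (n + 1) => ℝ) 0).symm
    rw [← hmp.lintegral_comp ((hm _ _ _).indicator (measurableSet_Osimp _ _))]
    have hm2 : Measurable fun a => (Osimp (n+1) r).indicator (fun x : Fin (n+1) → ℝ =>
        ENNReal.ofReal ((r - ∑ i, x i) ^ (v - 1) * ∏ i, (x i) ^ (u i - 1)))
        ((MeasurableEquiv.piFinSuccAbove (fun _ : Fin (n + 1) => ℝ) 0).symm a) :=
      ((hm _ _ _).indicator (measurableSet_Osimp _ _)).comp (MeasurableEquiv.measurable _)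
    rw [Measure.volume_eq_prod, lintegral_prod _ hm2.aemeasurable]
    have key : ∀ x : ℝ, ∫⁻ y : Fin n → ℝ, (Osimp (n+1) r).indicator (fun x : Fin (n+1) → ℝ =>
        ENNReal.ofReal ((r - ∑ i, x i) ^ (v - 1) * ∏ i, (x i) ^ (u i - 1)))
        ((MeasurableEquiv.piFinSuccAbove (fun _ : Fin (n + 1) => ℝ) 0).symm (x, y)) =
        (Set.Ioo 0 r).indicator (fun x => ENNReal.ofReal (x ^ (u 0 - 1) *
          (r - x) ^ ((∑ i : Fin n, u i.succ + v) - 1)) *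
          ENNReal.ofReal ((Gamma v * ∏ i : Fin n, Gamma (u i.succ)) / Gamma (∑ i : Fin n, u i.succ + v))) x := by
      intro x
      by_cases hx : x ∈ Set.Ioo 0 r
      · rw [Set.indicator_of_mem hx]
        have e : ∀ y : Fin n → ℝ, (Osimp (n+1) r).indicator (fun x : Fin (n+1) → ℝ =>
            ENNReal.ofReal ((r - ∑ i, x i) ^ (v - 1) * ∏ i, (x i) ^ (u i - 1)))
            ((MeasurableEquiv.piFinSuccAbove (fun _ : Fin (n + 1) => ℝ) 0).symm (x, y)) =
            (Osimp n (r - x)).indicator (fun y => ENNReal.ofReal (x ^ (u 0 - 1)) *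
              ENNReal.ofReal (((r - x) - ∑ i, y i) ^ (v - 1) * ∏ i, (y i) ^ (u i.succ - 1))) y := by
          intro y
          have hc : (MeasurableEquiv.piFinSuccAbove (fun _ : Fin (n + 1) => ℝ) 0).symm (x, y) =
              Fin.cons x y := by
            ext i
            simp [MeasurableEquiv.piFinSuccAbove]
          rw [hc]
          have hiff : (Fin.cons x y : Fin (n+1) → ℝ) ∈ Osimp (n+1) r ↔ y ∈ Osimp n (r - x) := by
            simp only [Osimp, Set.mem_ofPred_eq, Fin.forall_fin_succ, Fin.cons_zero, Fin.cons_succ,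
              Fin.sum_univ_succ]
            constructor
            · rintro ⟨⟨-, h⟩, h'⟩
              exact ⟨h, by linarith⟩
            · rintro ⟨h, h'⟩
              exact ⟨⟨hx.1, h⟩, by linarith⟩
          by_cases hy : y ∈ Osimp n (r - x)
          · rw [Set.indicator_of_mem hy, Set.indicator_of_mem (hiff.2 hy),
              ← ENNReal.ofReal_mul (rpow_nonneg hx.1.le _)]
            congr 1
            rw [Fin.sum_univ_succ, Fin.prod_univ_succ]
            simp only [Fin.cons_zero, Fin.cons_succ]
            rw [← sub_sub]; ring
          · rw [Set.indicator_of_notMem hy, Set.indicator_of_notMem (fun h => hy (hiff.1 h))]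
        simp_rw [e]
        rw [lintegral_indicator (measurableSet_Osimp _ _), lintegral_const_mul _ (hm n _ _),
          ih (fun i => u i.succ) v (r - x) (fun i => hu _) hv (by linarith [hx.2])]
        have h1 : 0 ≤ x ^ (u 0 - 1) := rpow_nonneg hx.1.le _
        have h2 : 0 ≤ (r - x) ^ ((∑ i : Fin n, u i.succ + v) - 1) :=
          rpow_nonneg (by linarith [hx.2]) _
        rw [← ENNReal.ofReal_mul h1, ← ENNReal.ofReal_mul (mul_nonneg h1 h2)]
        congr 1
        ring
      · rw [Set.indicator_of_notMem hx]
        refine lintegral_eq_zero_of_ae_eq_zero (Eventually.of_forall fun y => ?_)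
        have hc : (MeasurableEquiv.piFinSuccAbove (fun _ : Fin (n + 1) => ℝ) 0).symm (x, y) =
              Fin.cons x y := by
            ext i
            simp [MeasurableEquiv.piFinSuccAbove]
        beta_reduce
        rw [hc, Pi.zero_apply, Set.indicator_of_notMem]
        intro h
        apply hx
        simp only [Osimp, Set.mem_ofPred_eq, Fin.forall_fin_succ, Fin.cons_zero, Fin.cons_succ,
              Fin.sum_univ_succ] at h
        exact ⟨h.1.1, by
          have := Finset.sum_nonneg (s := Finset.univ) (f := y) fun i _ => (h.1.2 i).le
          linarith [h.2]⟩
    have hV : 0 < ∑ i : Fin n, u i.succ + v := by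
      have := Finset.sum_nonneg (s := Finset.univ) (f := fun i : Fin n => u i.succ) fun i _ => (hu _).le
      linarith
    rw [lintegral_congr key, lintegral_indicator measurableSet_Ioo, lintegral_mul_const _ (by fun_prop),
      beta_scaled (hu 0) hV hr]
    have hG := Gamma_pos_of_pos hV
    have hG0 := Gamma_pos_of_pos (hu 0)
    have hG1 := Gamma_pos_of_pos (add_pos (hu 0) hV)
    rw [← ENNReal.ofReal_mul (by positivity), Fin.sum_univ_succ, Fin.prod_univ_succ]
    congr 1
    simp only [← add_assoc]
    simp only [← add_assoc] at hG1
    field_simp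

end BB

namespace BB

lemma Osimp_subset (d : ℕ) : Osimp d 1 ⊆ Sd d := by
  rintro x ⟨h1, h2⟩
  have h3 : ∀ i, x i ≤ ∑ j, x j := fun i =>
    Finset.single_le_sum (f := x) (fun j _ => (h1 j).le) (Finset.mem_univ i)
  refine ⟨fun i => ⟨(h1 i).le, by linarith [h3 i]⟩, ?_⟩
  simp_rw [abs_of_pos (h1 _)]
  exact h2.le

lemma Sd_nonneg {d : ℕ} {x : Fin d → ℝ} (hx : x ∈ Sd d) (i : Fin d) : 0 ≤ x i := (hx.1 i).1

lemma Sd_sum {d : ℕ} {x : Fin d → ℝ} (hx : x ∈ Sd d) : ∑ i, x i ≤ 1 := by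
  have := hx.2
  simp_rw [abs_of_nonneg (Sd_nonneg hx _)] at this
  exact this

lemma isClosed_Sd (d : ℕ) : IsClosed (Sd d) := by
  have : Sd d = (⋂ i, {x : Fin d → ℝ | x i ∈ Set.Icc (0:ℝ) 1}) ∩ {x | ∑ i, |x i| ≤ 1} := by
    ext x; simp [Sd]
  rw [this]
  refine (isClosed_iInter fun i => isClosed_Icc.preimage (continuous_apply i)).inter
    (isClosed_le (by fun_prop) continuous_const)

lemma measurableSet_Sd (d : ℕ) : MeasurableSet (Sd d) := (isClosed_Sd d).measurableSet

lemma isCompact_Sd (d : ℕ) : IsCompact (Sd d) := by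
  refine (isCompact_univ_pi (fun _ : Fin d => isCompact_Icc (a := (0:ℝ)) (b := 1))).of_isClosed_subset
    (isClosed_Sd d) ?_
  intro x hx i _
  exact hx.1 i

lemma dirK_eq_zero {d : ℕ} {u : Fin d → ℝ} {v : ℝ} (hu : ∀ i, 1 < u i) (hv : 1 < v)
    {x : Fin d → ℝ} (hx : x ∈ Sd d) (hx' : x ∉ Osimp d 1) : dirK d u v x = 0 := by
  simp only [Osimp, Set.mem_ofPred_eq, not_and_or, not_forall, not_lt] at hx'
  rcases hx' with ⟨i, hi⟩ | h
  · have h0 : x i = 0 := le_antisymm hi (Sd_nonneg hx i)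
    have : ∏ i, (x i) ^ (u i - 1) = 0 := by
      apply Finset.prod_eq_zero (Finset.mem_univ i)
      rw [h0, Real.zero_rpow (by have := hu i; linarith)]
    rw [dirK, this, mul_zero]
  · have h0 : 1 - ∑ i, x i = 0 := by linarith [Sd_sum hx]
    rw [dirK, h0, Real.zero_rpow (by linarith)]
    simp

lemma dirK_nonneg {d : ℕ} {u : Fin d → ℝ} {v : ℝ} (hu : ∀ i, 1 < u i) (hv : 1 < v)
    {x : Fin d → ℝ} (hx : x ∈ Sd d) : 0 ≤ dirK d u v x := by
  have h1 : 0 < ∑ i, u i + v := by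
    have := Finset.sum_nonneg (s := Finset.univ) (f := u) fun i _ => by linarith [hu i]
    linarith
  have h2 := Sd_sum hx
  unfold dirK
  refine mul_nonneg (mul_nonneg (div_nonneg (Gamma_pos_of_pos h1).le (mul_nonneg
    (Gamma_pos_of_pos (by linarith)).le (Finset.prod_nonneg fun i _ =>
      (Gamma_pos_of_pos (by linarith [hu i])).le))) (rpow_nonneg (by linarith) _))
      (Finset.prod_nonneg fun i _ => rpow_nonneg (Sd_nonneg hx i) _)

lemma measurable_dirK (d : ℕ) (u : Fin d → ℝ) (v : ℝ) : Measurable (dirK d u v) := by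
  unfold dirK; fun_prop

lemma lintegral_dirK {d : ℕ} {u : Fin d → ℝ} {v : ℝ} (hu : ∀ i, 1 < u i) (hv : 1 < v) :
    ∫⁻ x in Sd d, ENNReal.ofReal (dirK d u v x) = 1 := by
  have h1 : 0 < ∑ i, u i + v := by
    have := Finset.sum_nonneg (s := Finset.univ) (f := u) fun i _ => by linarith [hu i]
    linarith
  have hA := Gamma_pos_of_pos h1
  have hB := Gamma_pos_of_pos (show 0 < v by linarith)
  have hC : 0 < ∏ i, Gamma (u i) := Finset.prod_pos fun i _ => Gamma_pos_of_pos (by linarith [hu i])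
  have e1 : ∫⁻ x in Sd d, ENNReal.ofReal (dirK d u v x) =
      ∫⁻ x in Osimp d 1, ENNReal.ofReal (dirK d u v x) := by
    rw [← lintegral_indicator (measurableSet_Sd d), ← lintegral_indicator (measurableSet_Osimp d 1)]
    apply lintegral_congr
    intro x
    by_cases hx : x ∈ Osimp d 1
    · rw [Set.indicator_of_mem hx, Set.indicator_of_mem (Osimp_subset d hx)]
    · rw [Set.indicator_of_notMem hx]
      by_cases hx' : x ∈ Sd d
      · rw [Set.indicator_of_mem hx', dirK_eq_zero hu hv hx' hx, ENNReal.ofReal_zero]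
      · rw [Set.indicator_of_notMem hx']
  rw [e1]
  have h3 := dirichlet_lintegral d u v 1 (fun i => by linarith [hu i]) (by linarith) one_pos
  simp only [dirK, mul_assoc]
  simp_rw [ENNReal.ofReal_mul (show 0 ≤ Gamma (∑ i, u i + v) / (Gamma v * ∏ i, Gamma (u i)) by positivity)]
  rw [lintegral_const_mul _ (by fun_prop), h3, ← ENNReal.ofReal_mul (by positivity), Real.one_rpow]
  rw [ENNReal.ofReal_eq_one]
  field_simp

lemma integrableOn_dirK {d : ℕ} {u : Fin d → ℝ} {v : ℝ} (hu : ∀ i, 1 < u i) (hv : 1 < v) :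
    IntegrableOn (dirK d u v) (Sd d) := by
  refine ⟨(measurable_dirK d u v).aestronglyMeasurable, ?_⟩
  rw [hasFiniteIntegral_iff_ofReal, lintegral_dirK hu hv]
  · simp
  · exact (ae_restrict_iff' (measurableSet_Sd d)).2 (Eventually.of_forall fun x hx => dirK_nonneg hu hv hx)

lemma integral_dirK {d : ℕ} {u : Fin d → ℝ} {v : ℝ} (hu : ∀ i, 1 < u i) (hv : 1 < v) :
    ∫ x in Sd d, dirK d u v x = 1 := by
  rw [integral_eq_lintegral_of_nonneg_ae, lintegral_dirK hu hv, ENNReal.toReal_one]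
  · exact (ae_restrict_iff' (measurableSet_Sd d)).2 (Eventually.of_forall fun x hx => dirK_nonneg hu hv hx)
  · exact (measurable_dirK d u v).aestronglyMeasurable

lemma dirK_mul {d : ℕ} {u : Fin d → ℝ} {v : ℝ} (hu : ∀ i, 1 < u i) (hv : 1 < v) (i : Fin d)
    {x : Fin d → ℝ} (hx : x ∈ Sd d) :
    dirK d u v x * x i = u i / (∑ j, u j + v) * dirK d (Function.update u i (u i + 1)) v x := by
  have hu' : ∀ j, 1 < Function.update u i (u i + 1) j := by
    intro j
    by_cases h : j = i
    · subst h; simp; linarith [hu j]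
    · simp [h, hu j]
  by_cases hx' : x ∈ Osimp d 1
  · have h1 : 0 < ∑ i, u i + v := by
      have := Finset.sum_nonneg (s := Finset.univ) (f := u) fun i _ => by linarith [hu i]
      linarith
    have hA := Gamma_pos_of_pos h1
    have hB := Gamma_pos_of_pos (show 0 < v by linarith)
    have hui : 0 < u i := by linarith [hu i]
    have e1 : ∑ j, Function.update u i (u i + 1) j = ∑ j, u j + 1 := by
      rw [Finset.sum_update_of_mem (Finset.mem_univ i),
        ← Finset.add_sum_erase _ u (Finset.mem_univ i), Finset.sdiff_singleton_eq_erase]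
      ring
    have e2 : ∏ j, Gamma (Function.update u i (u i + 1) j) = u i * ∏ j, Gamma (u j) := by
      rw [← Finset.mul_prod_erase _ (fun j => Gamma (u j)) (Finset.mem_univ i),
        ← Finset.mul_prod_erase _ _ (Finset.mem_univ i)]
      rw [Function.update_self, Gamma_add_one hui.ne', mul_assoc]
      congr 2
      exact Finset.prod_congr rfl fun j hj => by
        rw [Function.update_of_ne (Finset.ne_of_mem_erase hj)]
    have e3 : ∏ j, (x j) ^ (Function.update u i (u i + 1) j - 1) = x i * ∏ j, (x j) ^ (u j - 1) := by
      rw [← Finset.mul_prod_erase _ (fun j => x j ^ (u j - 1)) (Finset.mem_univ i),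
        ← Finset.mul_prod_erase _ _ (Finset.mem_univ i)]
      rw [Function.update_self, ← mul_assoc]
      congr 1
      · have := hx'.1 i
        rw [show u i + 1 - 1 = (1 : ℝ) + (u i - 1) by ring, Real.rpow_add this, Real.rpow_one]
      · exact Finset.prod_congr rfl fun j hj => by
          rw [Function.update_of_ne (Finset.ne_of_mem_erase hj)]
    have hC : 0 < ∏ i, Gamma (u i) := Finset.prod_pos fun i _ => Gamma_pos_of_pos (by linarith [hu i])
    unfold dirK
    rw [e1, e2, e3, show ∑ j, u j + 1 + v = (∑ j, u j + v) + 1 by ring, Gamma_add_one h1.ne']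
    field_simp
  · rw [dirK_eq_zero hu hv hx hx', dirK_eq_zero hu' hv hx hx']; simp

lemma dirK_var {d : ℕ} {u : Fin d → ℝ} {v : ℝ} (hu : ∀ i, 1 < u i) (hv : 1 < v) (i : Fin d) (c : ℝ) :
    IntegrableOn (fun x => dirK d u v x * (x i - c) ^ 2) (Sd d) ∧
    ∫ x in Sd d, dirK d u v x * (x i - c) ^ 2 =
      u i * (u i + 1) / ((∑ j, u j + v) * (∑ j, u j + v + 1)) - 2 * c * (u i / (∑ j, u j + v)) + c ^ 2 := by
  have hu' : ∀ (u : Fin d → ℝ), (∀ i, 1 < u i) → ∀ j, 1 < Function.update u i (u i + 1) j := by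
    intro u hu j
    by_cases h : j = i
    · subst h; simp; linarith [hu j]
    · simp [h, hu j]
  have e1 : ∑ j, Function.update u i (u i + 1) j = ∑ j, u j + 1 := by
    rw [Finset.sum_update_of_mem (Finset.mem_univ i),
      ← Finset.add_sum_erase _ u (Finset.mem_univ i), Finset.sdiff_singleton_eq_erase]
    ring
  set u1 := Function.update u i (u i + 1) with hu1
  set u2 := Function.update u1 i (u1 i + 1) with hu2
  have e0 : u1 i = u i + 1 := by simp [hu1]
  have key : ∀ x ∈ Sd d, dirK d u v x * (x i - c) ^ 2 =
      u i * (u i + 1) / ((∑ j, u j + v) * (∑ j, u j + v + 1)) * dirK d u2 v x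
        - 2 * c * (u i / (∑ j, u j + v)) * dirK d u1 v x + c ^ 2 * dirK d u v x := by
    intro x hx
    have a1 := dirK_mul hu hv i hx
    have a2 := dirK_mul (hu' u hu) hv i hx
    rw [← hu1] at a1
    rw [← hu1, ← hu2, e0, e1, show ∑ j, u j + 1 + v = (∑ j, u j + v) + 1 by ring] at a2
    calc dirK d u v x * (x i - c) ^ 2 = (dirK d u v x * x i) * x i - 2 * c * (dirK d u v x * x i)
          + c ^ 2 * dirK d u v x := by ring
      _ = (u i / (∑ j, u j + v)) * (dirK d u1 v x * x i) - 2 * c * (u i / (∑ j, u j + v) * dirK d u1 v x)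
          + c ^ 2 * dirK d u v x := by rw [a1]; ring
      _ = _ := by rw [a2, mul_div_mul_comm]; ring
  have k1 : ∀ j, 1 < u1 j := hu' u hu
  have k2 : ∀ j, 1 < u2 j := hu' u1 k1
  have i2 := (integrableOn_dirK k2 hv).const_mul
    (u i * (u i + 1) / ((∑ j, u j + v) * (∑ j, u j + v + 1)))
  have i1 := (integrableOn_dirK k1 hv).const_mul (2 * c * (u i / (∑ j, u j + v)))
  have i0 := (integrableOn_dirK hu hv).const_mul (c ^ 2)
  constructor
  · refine IntegrableOn.congr_fun ((i2.sub i1).add i0) (fun x hx => ?_) (measurableSet_Sd d)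
    exact (key x hx).symm
  · rw [setIntegral_congr_fun (measurableSet_Sd d) key, 
      integral_add (f := fun x => u i * (u i + 1) / ((∑ j, u j + v) * (∑ j, u j + v + 1)) * dirK d u2 v x
        - 2 * c * (u i / (∑ j, u j + v)) * dirK d u1 v x) (i2.sub i1) i0, integral_sub i2 i1,
      integral_const_mul, integral_const_mul, integral_const_mul, integral_dirK hu hv,
      integral_dirK k1 hv, integral_dirK k2 hv]
    ring

end BB

namespace BB

lemma Gamma_half_sq {x : ℝ} (hx : 0 < x) : Gamma (x + 1 / 2) ^ 2 ≤ Gamma x * Gamma (x + 1) := by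
  have h := Gamma_mul_add_mul_le_rpow_Gamma_mul_rpow_Gamma hx (show 0 < x + 1 by linarith)
    (show (0:ℝ) < 1 / 2 by norm_num) (show (0:ℝ) < 1 / 2 by norm_num) (by norm_num)
  rw [show 1 / 2 * x + 1 / 2 * (x + 1) = x + 1 / 2 by ring] at h
  have h1 := Gamma_pos_of_pos hx
  have h2 := Gamma_pos_of_pos (show 0 < x + 1 by linarith)
  have h3 := Gamma_pos_of_pos (show 0 < x + 1 / 2 by linarith)
  rw [← Real.sqrt_eq_rpow, ← Real.sqrt_eq_rpow, ← Real.sqrt_mul h1.le] at h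
  calc Gamma (x + 1 / 2) ^ 2 ≤ (√(Gamma x * Gamma (x + 1))) ^ 2 := by gcongr
    _ = _ := Real.sq_sqrt (by positivity)

noncomputable def rho (x : ℝ) : ℝ := Gamma (2 * x + 1) / Gamma (x + 1) ^ 2 * √x * 4 ^ (-x)

lemma rho_eq {x : ℝ} (hx : 0 < x) : rho x = (Gamma (x + 1 / 2) * √x / Gamma (x + 1)) / √π := by
  have h := Real.Gamma_mul_Gamma_add_half (x + 1 / 2)
  have h2 := Gamma_pos_of_pos (show 0 < x + 1 by linarith)
  rw [show x + 1 / 2 + 1 / 2 = x + 1 by ring, show 2 * (x + 1 / 2) = 2 * x + 1 by ring,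
    show 1 - (2 * x + 1) = 2 * (-x) by ring, Real.rpow_mul (by norm_num), Real.rpow_two] at h
  norm_num at h
  have hpi : 0 < √π := Real.sqrt_pos.2 Real.pi_pos
  unfold rho
  field_simp
  rw [← h, show (2 * x + 1) / 2 = x + 1 / 2 by ring, mul_comm]

lemma tendsto_rho : Tendsto rho atTop (𝓝 (1 / √π)) := by
  have h1 : Tendsto (fun x : ℝ => Gamma (x + 1 / 2) * √x / Gamma (x + 1)) atTop (𝓝 1) := by
    have hl : Tendsto (fun x : ℝ => √(x / (x + 1 / 2))) atTop (𝓝 1) := by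
      have : Tendsto (fun x : ℝ => √(1 - (1 / 2) / (x + 1 / 2))) atTop (𝓝 (√(1 - 0))) := by
        refine (Tendsto.sub tendsto_const_nhds ?_).sqrt
        exact Tendsto.const_div_atTop (tendsto_atTop_add_const_right _ _ tendsto_id) _
      rw [sub_zero, Real.sqrt_one] at this
      refine this.congr' ?_
      filter_upwards [eventually_gt_atTop 0] with x hx
      congr 1
      field_simp
      ring
    refine tendsto_of_tendsto_of_tendsto_of_le_of_le' hl tendsto_const_nhds ?_ ?_
    · filter_upwards [eventually_gt_atTop 0] with x hx
      have a := Gamma_half_sq (show 0 < x + 1 / 2 by linarith)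
      have h3 := Gamma_pos_of_pos (show 0 < x + 1 / 2 by linarith)
      have h2 := Gamma_pos_of_pos (show 0 < x + 1 by linarith)
      rw [show x + 1 / 2 + 1 / 2 = x + 1 by ring, Gamma_add_one (s := x + 1 / 2) (by positivity)] at a
      rw [Real.sqrt_le_left (by positivity), div_pow, mul_pow, Real.sq_sqrt hx.le,
        div_le_div_iff₀ (by positivity) (by positivity)]
      nlinarith
    · filter_upwards [eventually_gt_atTop 0] with x hx
      have a := Gamma_half_sq hx
      have h3 := Gamma_pos_of_pos (show 0 < x + 1 / 2 by linarith)
      have h2 := Gamma_pos_of_pos (show 0 < x + 1 by linarith)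
      rw [div_le_one h2]
      refine le_of_sq_le_sq ?_ h2.le
      rw [mul_pow, Real.sq_sqrt hx.le]
      calc Gamma (x + 1 / 2) ^ 2 * x ≤ Gamma x * Gamma (x + 1) * x := by gcongr
        _ = _ := by rw [Gamma_add_one hx.ne']; ring
  refine ((h1.div_const (√π))).congr' ?_
  filter_upwards [eventually_gt_atTop 0] with x hx
  exact (rho_eq hx).symm

lemma Gamma_upper {x : ℝ} (hx : 1 ≤ x) :
    Gamma (x + 1) ≤ 2 * exp 2 * (√x * x ^ x * exp (-x)) := by
  obtain ⟨n, hn⟩ : ∃ n, n = ⌊x⌋₊ := ⟨_, rfl⟩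
  have hn1 : 1 ≤ n := by rw [hn]; exact Nat.le_floor (by exact_mod_cast hx)
  have hnx : (n : ℝ) ≤ x := by rw [hn]; exact Nat.floor_le (by linarith)
  have hxn : x < n + 1 := by rw [hn]; exact Nat.lt_floor_add_one x
  have hn1' : (1:ℝ) ≤ n := by exact_mod_cast hn1
  have hnpos : (0:ℝ) < n := by linarith
  obtain ⟨θ, hθ⟩ : ∃ θ, θ = x - n := ⟨_, rfl⟩
  have hθ0 : 0 ≤ θ := by linarith
  have hθ1 : θ < 1 := by linarith
  have hxe : x = n + θ := by linarith
  have hG : Gamma (n + 1) = n.factorial := Real.Gamma_nat_eq_factorial n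
  have hfac : (0:ℝ) < n.factorial := by positivity
  have s1 : Gamma (x + 1) ≤ n.factorial * ((n:ℝ) + 1) ^ θ := by
    rcases hθ0.eq_or_lt with h0 | h0
    · rw [hxe, ← h0]; simp [hG]
    have h := Gamma_mul_add_mul_le_rpow_Gamma_mul_rpow_Gamma (show (0:ℝ) < n + 1 by positivity)
      (show (0:ℝ) < n + 1 + 1 by positivity) (show 0 < 1 - θ by linarith) h0 (by ring)
    rw [Gamma_add_one (show (n:ℝ) + 1 ≠ 0 by positivity), hG, Real.mul_rpow (by positivity) (by positivity)] at h
    calc Gamma (x + 1) = Gamma ((1 - θ) * (n + 1) + θ * (n + 1 + 1)) := by congr 1; rw [hxe]; ring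
      _ ≤ _ := h
      _ = ((n.factorial : ℝ) ^ (1 - θ) * (n.factorial : ℝ) ^ θ) * ((n:ℝ) + 1) ^ θ := by ring
      _ = _ := by rw [← Real.rpow_add hfac]; simp
  have s2 : ((n:ℝ) + 1) ^ θ ≤ 2 * (n:ℝ) ^ θ := by
    calc ((n:ℝ) + 1) ^ θ ≤ (2 * n) ^ θ := by gcongr; linarith
      _ = 2 ^ θ * (n:ℝ) ^ θ := Real.mul_rpow (by norm_num) hnpos.le
      _ ≤ 2 ^ (1:ℝ) * (n:ℝ) ^ θ := by gcongr; norm_num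
      _ = _ := by simp
  have s3 : (n.factorial : ℝ) ≤ exp 1 * (√n * (n:ℝ) ^ (n:ℝ) * exp (-n)) := by
    obtain ⟨m, rfl⟩ : ∃ m, n = m + 1 := ⟨n - 1, by omega⟩
    have := Stirling.stirlingSeq'_antitone (Nat.zero_le m)
    simp only [Function.comp, Nat.succ_eq_add_one, zero_add, Stirling.stirlingSeq_one] at this
    rw [Stirling.stirlingSeq, div_le_div_iff₀ (by positivity) (by positivity)] at this
    rw [Real.sqrt_mul (by norm_num)] at this
    have h2 : (0:ℝ) < √2 := by positivity
    rw [Real.rpow_natCast, Real.exp_neg]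
    rw [div_pow, ← Real.exp_nat_mul, mul_one] at this
    refine le_of_mul_le_mul_right (this.trans_eq ?_) h2
    ring
  calc Gamma (x + 1) ≤ n.factorial * ((n:ℝ) + 1) ^ θ := s1
    _ ≤ (exp 1 * (√n * (n:ℝ) ^ (n:ℝ) * exp (-n))) * (2 * (n:ℝ) ^ θ) := by gcongr
    _ = 2 * exp 1 * (√n * ((n:ℝ) ^ (n:ℝ) * (n:ℝ) ^ θ) * exp (-n)) := by ring
    _ = 2 * exp 1 * (√n * (n:ℝ) ^ x * exp (-n)) := by rw [← Real.rpow_add hnpos, ← hxe]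
    _ ≤ 2 * exp 1 * (√x * x ^ x * exp (1 - x)) := by gcongr; linarith
    _ = _ := by
      rw [show (1 - x : ℝ) = 1 + (-x) by ring, Real.exp_add, show (2:ℝ) * exp 2 = 2 * (exp 1 * exp 1) by
        rw [← Real.exp_add]; norm_num]
      ring

lemma Gamma_lower {x : ℝ} (hx : 1 ≤ x) :
    √x * x ^ x * exp (-x) ≤ 2 * exp 1 * Gamma (x + 1) := by
  obtain ⟨m, hm⟩ : ∃ m, m = ⌊x⌋₊ + 1 := ⟨_, rfl⟩
  have hxm : x < m := by rw [hm]; exact_mod_cast Nat.lt_floor_add_one x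
  have hmx : (m : ℝ) ≤ x + 1 := by
    rw [hm]; push_cast; have := Nat.floor_le (show 0 ≤ x by linarith); linarith
  have hxpos : 0 < x := by linarith
  have hmpos : (0:ℝ) < m := by linarith
  obtain ⟨θ, hθ⟩ : ∃ θ, θ = m - x := ⟨_, rfl⟩
  have hθ0 : 0 < θ := by linarith
  have hθ1 : θ ≤ 1 := by linarith
  have hG : Gamma (m + 1) = m.factorial := Real.Gamma_nat_eq_factorial m
  have hGx := Gamma_pos_of_pos (show 0 < x + 1 by linarith)
  have s1 : (m.factorial : ℝ) ≤ Gamma (x + 1) * (x + 1) ^ θ := by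
    rcases hθ1.eq_or_lt with h0 | h0
    · have : (m:ℝ) = x + 1 := by linarith
      rw [← hG, this, h0, Real.rpow_one, Gamma_add_one (by linarith), mul_comm]
    have h := Gamma_mul_add_mul_le_rpow_Gamma_mul_rpow_Gamma (show 0 < x + 1 by linarith)
      (show 0 < x + 1 + 1 by linarith) (show 0 < 1 - θ by linarith) hθ0 (by ring)
    rw [Gamma_add_one (show x + 1 ≠ 0 by positivity), Real.mul_rpow (by positivity) hGx.le] at h
    calc (m.factorial : ℝ) = Gamma ((1 - θ) * (x + 1) + θ * (x + 1 + 1)) := by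
          rw [← hG]; congr 1; rw [hθ]; ring
      _ ≤ _ := h
      _ = (Gamma (x + 1) ^ (1 - θ) * Gamma (x + 1) ^ θ) * (x + 1) ^ θ := by ring
      _ = _ := by rw [← Real.rpow_add hGx]; simp
  have s2 : (x + 1) ^ θ ≤ 2 * x ^ θ := by
    calc (x + 1) ^ θ ≤ (2 * x) ^ θ := by gcongr; linarith
      _ = 2 ^ θ * x ^ θ := Real.mul_rpow (by norm_num) hxpos.le
      _ ≤ 2 ^ (1:ℝ) * x ^ θ := by gcongr; norm_num
      _ = _ := by simp
  have s3 := Stirling.le_factorial_stirling m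
  have s4 : √x * (x ^ (m:ℝ) * exp (-m)) ≤ m.factorial := by
    refine le_trans ?_ s3
    rw [div_pow, ← Real.exp_nat_mul, mul_one, Real.exp_neg, ← Real.rpow_natCast, div_eq_mul_inv]
    gcongr
    nlinarith [Real.pi_gt_three]
  have hxθ : 0 < x ^ θ := by positivity
  refine le_of_mul_le_mul_right (?_ : _ * x ^ θ ≤ _ * x ^ θ) hxθ
  calc √x * x ^ x * exp (-x) * x ^ θ = √x * (x ^ x * x ^ θ) * exp (-x) := by ring
    _ = √x * x ^ (m:ℝ) * exp (-x) := by rw [← Real.rpow_add hxpos, hθ]; congr 3; ring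
    _ ≤ √x * x ^ (m:ℝ) * (exp 1 * exp (-m)) := by
        rw [← Real.exp_add]; gcongr; linarith
    _ = exp 1 * (√x * (x ^ (m:ℝ) * exp (-m))) := by ring
    _ ≤ exp 1 * (Gamma (x + 1) * (2 * x ^ θ)) := by
        exact mul_le_mul_of_nonneg_left (s4.trans (s1.trans (by gcongr))) (exp_pos 1).le
    _ = _ := by ring

lemma Gamma_add_nat {x : ℝ} (hx : 0 < x) (d : ℕ) :
    Gamma (x + d + 1) = Gamma (x + 1) * ∏ k ∈ Finset.range d, (x + 1 + k) := by
  induction d with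
  | zero => simp
  | succ n ih =>
    rw [Finset.prod_range_succ, ← mul_assoc, ← ih]
    push_cast
    rw [show x + (n + 1) + 1 = (x + n + 1) + 1 by ring, Gamma_add_one (by positivity)]
    ring

end BB

namespace BB

variable {d : ℕ} {s : Fin d → ℝ}

lemma s_pos (hs : s ∈ SdInt d) (i : Fin d) : 0 < s i := (hs.1 i).1

lemma s0_pos (hs : s ∈ SdInt d) : 0 < 1 - ∑ i, s i := by
  have := hs.2
  simp_rw [abs_of_pos (s_pos hs _)] at this
  linarith

lemma SdInt_subset (hs : s ∈ SdInt d) : s ∈ Sd d :=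
  ⟨fun i => ⟨(hs.1 i).1.le, (hs.1 i).2.le⟩, hs.2.le⟩

noncomputable def cst (d : ℕ) (s : Fin d → ℝ) (b : ℝ) : ℝ :=
  Gamma (b⁻¹ + d + 1) / (Gamma ((1 - ∑ i, s i) * b⁻¹ + 1) * ∏ i, Gamma (s i * b⁻¹ + 1))

lemma kappa_eq (b : ℝ) (x : Fin d → ℝ) : kappa d s b x =
    cst d s b * (1 - ∑ i, x i) ^ ((1 - ∑ i, s i) * b⁻¹) * ∏ i, (x i) ^ (s i * b⁻¹) := by
  have : ∑ i, (s i / b + 1) + ((1 - ∑ i, s i) / b + 1) = b⁻¹ + d + 1 := by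
    rw [Finset.sum_add_distrib, ← Finset.sum_div]
    simp
    ring
  unfold kappa dirK cst
  rw [this]
  simp only [add_sub_cancel_right, div_eq_mul_inv]

lemma u_gt (hs : s ∈ SdInt d) {b : ℝ} (hb : 0 < b) (i : Fin d) : 1 < s i / b + 1 := by
  have := div_pos (s_pos hs i) hb
  linarith

lemma v_gt (hs : s ∈ SdInt d) {b : ℝ} (hb : 0 < b) : 1 < (1 - ∑ i, s i) / b + 1 := by
  have := div_pos (s0_pos hs) hb
  linarith

lemma cst_pos (hs : s ∈ SdInt d) {b : ℝ} (hb : 0 < b) : 0 < cst d s b := by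
  have h0 := s0_pos hs
  have h1 := Gamma_pos_of_pos (show 0 < b⁻¹ + d + 1 by positivity)
  have h2 := Gamma_pos_of_pos (show 0 < (1 - ∑ i, s i) * b⁻¹ + 1 by positivity)
  have h3 : 0 < ∏ i, Gamma (s i * b⁻¹ + 1) := Finset.prod_pos fun i _ => by
    have := s_pos hs i
    exact Gamma_pos_of_pos (by positivity)
  unfold cst; positivity

noncomputable def Afun (d : ℕ) (s : Fin d → ℝ) (b : ℝ) : ℝ := cst d s b ^ 2 / cst d s (b / 2)

lemma kappa_sq (hs : s ∈ SdInt d) {b : ℝ} (hb : 0 < b) {x : Fin d → ℝ} (hx : x ∈ Sd d) :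
    kappa d s b x ^ 2 = Afun d s b * kappa d s (b / 2) x := by
  have h := cst_pos hs (half_pos hb)
  rw [kappa_eq, kappa_eq, Afun]
  have e : ∀ t y : ℝ, 0 ≤ y → (y ^ (t * b⁻¹)) ^ 2 = y ^ (t * (b / 2)⁻¹) := by
    intro t y hy
    rw [← Real.rpow_natCast, ← Real.rpow_mul hy]
    congr 1
    push_cast
    field_simp
  rw [mul_pow, mul_pow, e _ _ (by linarith [Sd_sum hx]), ← Finset.prod_pow,
    Finset.prod_congr rfl fun i _ => e (s i) (x i) (Sd_nonneg hx i)]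
  field_simp

lemma Afun_eq (hs : s ∈ SdInt d) {b : ℝ} (hb : 0 < b) :
    b ^ ((d:ℝ) / 2) * Afun d s b =
      (rho ((1 - ∑ i, s i) * b⁻¹) * ∏ i, rho (s i * b⁻¹)) / rho (b⁻¹) /
        (√(1 - ∑ i, s i) * ∏ i, √(s i)) *
        ∏ k ∈ Finset.range d, ((b⁻¹ + 1 + k) ^ 2 / ((2 * b⁻¹ + 1 + k) * b⁻¹)) := by
  have hs0 := s0_pos hs
  obtain ⟨N, hN⟩ : ∃ N, N = b⁻¹ := ⟨_, rfl⟩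
  have hNpos : 0 < N := by rw [hN]; positivity
  obtain ⟨s0, hs0e⟩ : ∃ t, t = 1 - ∑ i, s i := ⟨_, rfl⟩
  rw [← hs0e] at hs0
  have hb2 : (b / 2)⁻¹ = 2 * N := by rw [hN]; field_simp
  have hbd : b ^ ((d:ℝ) / 2) = ((√N) ^ d)⁻¹ := by
    have : b = N⁻¹ := by rw [hN, inv_inv]
    rw [this, Real.inv_rpow hNpos.le, Real.sqrt_eq_rpow, ← Real.rpow_natCast, ← Real.rpow_mul hNpos.le]
    congr 2; ring
  unfold Afun cst
  rw [hb2, ← hN, ← hs0e, Gamma_add_nat hNpos, Gamma_add_nat (show 0 < 2 * N by positivity), hbd]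
  have hr : ∀ i, rho (s i * N) = Gamma (s i * (2 * N) + 1) * (Gamma (s i * N + 1) ^ 2)⁻¹ * (√(s i) * √N)
      * 4 ^ (-(s i * N)) := by
    intro i
    rw [rho, Real.sqrt_mul (s_pos hs i).le, show 2 * (s i * N) = s i * (2 * N) by ring]; ring
  have hp : ∏ i, (4:ℝ) ^ (-(s i * N)) = 4 ^ (-N) * 4 ^ (s0 * N) := by
    rw [← Real.rpow_sum_of_pos (by norm_num), ← Real.rpow_add (by norm_num)]
    congr 1
    rw [Finset.sum_neg_distrib, ← Finset.sum_mul, hs0e]; ring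
  simp_rw [hr]
  simp only [Finset.prod_mul_distrib, Finset.prod_div_distrib, Finset.prod_inv_distrib, Finset.prod_pow,
    Finset.prod_const, Finset.card_univ, Fintype.card_fin, Finset.card_range]
  rw [hp, rho, rho, Real.sqrt_mul hs0.le, show 2 * (s0 * N) = s0 * (2 * N) by ring]
  have c1 : 0 < ∏ i, √(s i) := Finset.prod_pos fun i _ => Real.sqrt_pos.2 (s_pos hs i)
  have c2 : 0 < ∏ i, Gamma (s i * N + 1) := Finset.prod_pos fun i _ => by
    have := s_pos hs i
    exact Gamma_pos_of_pos (by positivity)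
  have c3 : 0 < ∏ i, Gamma (s i * (2 * N) + 1) := Finset.prod_pos fun i _ => by
    have := s_pos hs i
    exact Gamma_pos_of_pos (by positivity)
  have c4 := Gamma_pos_of_pos (show 0 < s0 * N + 1 by positivity)
  have c5 := Gamma_pos_of_pos (show 0 < s0 * (2 * N) + 1 by positivity)
  have c6 := Gamma_pos_of_pos (show 0 < N + 1 by positivity)
  have c7 := Gamma_pos_of_pos (show 0 < 2 * N + 1 by positivity)
  have c8 : 0 < ∏ k ∈ Finset.range d, (N + 1 + k) := Finset.prod_pos fun i _ => by positivity
  have c9 : 0 < ∏ k ∈ Finset.range d, (2 * N + 1 + k) := Finset.prod_pos fun i _ => by positivity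
  have c10 : 0 < √s0 := Real.sqrt_pos.2 hs0
  have c11 : 0 < √N := Real.sqrt_pos.2 hNpos
  have c12 : N ^ d = (√N) ^ d * (√N) ^ d := by
    rw [← mul_pow, Real.mul_self_sqrt hNpos.le]
  have c13 : (4:ℝ) ^ (-(s0 * N)) = (4 ^ (s0 * N))⁻¹ := Real.rpow_neg (by norm_num) _
  have c14 : (0:ℝ) < 4 ^ (s0 * N) := by positivity
  have c15 : (0:ℝ) < 4 ^ (-N) := by positivity
  rw [c12, c13]
  generalize ∏ i, √(s i) = q1 at *
  generalize ∏ i, Gamma (s i * N + 1) = q2 at *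
  generalize ∏ i, Gamma (s i * (2 * N) + 1) = q3 at *
  generalize ∏ k ∈ Finset.range d, (N + 1 + k) = q4 at *
  generalize ∏ k ∈ Finset.range d, (2 * N + 1 + k) = q5 at *
  generalize (4:ℝ) ^ (s0 * N) = q6 at *
  generalize (4:ℝ) ^ (-N) = q7 at *
  generalize Gamma (s0 * N + 1) = q8 at *
  generalize Gamma (s0 * (2 * N) + 1) = q9 at *
  generalize Gamma (N + 1) = q10 at *
  generalize Gamma (2 * N + 1) = q11 at *
  generalize √s0 = q12 at *
  generalize √N = q13 at *
  field_simp

lemma tendsto_Afun (hs : s ∈ SdInt d) :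
    Tendsto (fun b : ℝ => b ^ ((d:ℝ) / 2) * Afun d s b) (𝓝[>] 0) (𝓝 (psiFun d s)) := by
  have hs0 := s0_pos hs
  have hinv : Tendsto (fun b : ℝ => b⁻¹) (𝓝[>] 0) atTop := tendsto_inv_nhdsGT_zero
  have hr : ∀ t : ℝ, 0 < t → Tendsto (fun b : ℝ => rho (t * b⁻¹)) (𝓝[>] 0) (𝓝 (1 / √π)) :=
    fun t ht => tendsto_rho.comp (hinv.const_mul_atTop ht)
  have hk : ∀ k : ℕ, Tendsto (fun b : ℝ => (b⁻¹ + 1 + k) ^ 2 / ((2 * b⁻¹ + 1 + k) * b⁻¹)) (𝓝[>] 0)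
      (𝓝 (1 / 2)) := by
    intro k
    have : Tendsto (fun b : ℝ => (1 + b + k * b) ^ 2 / (2 + b + k * b)) (𝓝[>] 0)
        (𝓝 (((1:ℝ) + 0 + k * 0) ^ 2 / (2 + 0 + k * 0))) := by
      refine Tendsto.mono_left ?_ nhdsWithin_le_nhds
      exact ContinuousAt.tendsto (f := fun b : ℝ => (1 + b + k * b) ^ 2 / (2 + b + k * b)) (x := 0)
        (by apply ContinuousAt.div (by fun_prop) (by fun_prop); norm_num)
    rw [show ((1:ℝ) + 0 + k * 0) ^ 2 / (2 + 0 + k * 0) = 1 / 2 by norm_num] at this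
    refine this.congr' ?_
    filter_upwards [self_mem_nhdsWithin] with b hb
    have hb : 0 < b := hb
    field_simp
  have hpi : 0 < √π := Real.sqrt_pos.2 Real.pi_pos
  have hmain := (((hr _ hs0).mul (tendsto_finsetProd Finset.univ fun i _ => hr _ (s_pos hs i))).div
    (tendsto_rho.comp hinv) (by positivity)).div_const (√(1 - ∑ i, s i) * ∏ i, √(s i))
  have hmain2 := hmain.mul (tendsto_finsetProd (Finset.range d) fun k _ => hk k)
  have e : 1 / √π * (∏ i : Fin d, (1 / √π)) / (1 / √π) / (√(1 - ∑ i, s i) * ∏ i, √(s i)) *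
      ∏ k ∈ Finset.range d, (1 / 2 : ℝ) = psiFun d s := by
    unfold psiFun
    simp only [← Real.sqrt_eq_rpow]
    have h4 : (4 * π) ^ (-(d:ℝ) / 2) = ((2 * √π) ^ d)⁻¹ := by
      rw [neg_div, Real.rpow_neg (by positivity), show (d:ℝ) / 2 = 1 / 2 * d by ring,
        Real.rpow_mul (by positivity), ← Real.sqrt_eq_rpow, Real.rpow_natCast, Real.sqrt_mul (by norm_num)]
      rw [show √4 = (2:ℝ) by rw [show (4:ℝ) = 2 ^ 2 by norm_num]; exact Real.sqrt_sq (by norm_num)]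
    rw [h4]
    simp only [Finset.prod_const, Finset.card_univ, Fintype.card_fin, Finset.card_range]
    rw [mul_pow, one_div_pow, one_div_pow]
    field_simp
  rw [← e]
  refine hmain2.congr' ?_
  filter_upwards [self_mem_nhdsWithin] with b hb
  exact (Afun_eq hs hb).symm

lemma term_bound {t N y : ℝ} (ht : 0 < t) (hN : 0 < N) (htN : 1 ≤ t * N) (hy : 0 ≤ y) :
    y ^ (t * N) / Gamma (t * N + 1) ≤ 2 * exp 1 / (√t * √N) * N ^ (-(t * N)) * exp (N * y) := by
  have h1 : y ≤ t * exp (y / t - 1) := by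
    have := Real.add_one_le_exp (y / t - 1)
    calc y = t * (y / t - 1 + 1) := by field_simp; ring
      _ ≤ _ := by gcongr
  have h2 : y ^ (t * N) ≤ t ^ (t * N) * exp (N * (y - t)) := by
    calc y ^ (t * N) ≤ (t * exp (y / t - 1)) ^ (t * N) := by gcongr
      _ = _ := by
        rw [Real.mul_rpow ht.le (exp_pos _).le, ← Real.exp_mul]
        congr 2; field_simp
  have h3 := Gamma_lower htN
  have hG := Gamma_pos_of_pos (show 0 < t * N + 1 by positivity)
  rw [Real.sqrt_mul ht.le, Real.mul_rpow ht.le hN.le] at h3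
  have a1 : 0 < √t := Real.sqrt_pos.2 ht
  have a2 : 0 < √N := Real.sqrt_pos.2 hN
  rw [div_le_iff₀ hG]
  have hpos : 0 < √t * √N * N ^ (t * N) := by positivity
  refine le_of_mul_le_mul_left (?_ : √t * √N * N ^ (t * N) * _ ≤ √t * √N * N ^ (t * N) * _) hpos
  calc √t * √N * N ^ (t * N) * y ^ (t * N)
      ≤ √t * √N * N ^ (t * N) * (t ^ (t * N) * exp (N * (y - t))) := by gcongr
    _ = (√t * √N * (t ^ (t * N) * N ^ (t * N)) * exp (-(t * N))) * exp (N * y) := by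
        rw [show N * (y - t) = -(t * N) + N * y by ring, Real.exp_add]; ring
    _ ≤ (2 * exp 1 * Gamma (t * N + 1)) * exp (N * y) := by gcongr
    _ = _ := by rw [Real.rpow_neg hN.le]; field_simp

lemma kappa_sup (hs : s ∈ SdInt d) : ∃ C : ℝ, 0 < C ∧ ∀ᶠ b in 𝓝[>] (0:ℝ), ∀ x ∈ Sd d,
    kappa d s b x ≤ C * b ^ (-(d:ℝ) / 2) := by
  have hs0 := s0_pos hs
  have c1 : 0 < ∏ i, √(s i) := Finset.prod_pos fun i _ => Real.sqrt_pos.2 (s_pos hs i)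
  have c10 : 0 < √(1 - ∑ i, s i) := Real.sqrt_pos.2 hs0
  refine ⟨2 * exp 2 * (2 * exp 1) ^ (d + 1) * (d + 1) ^ d / (√(1 - ∑ i, s i) * ∏ i, √(s i)),
    by positivity, ?_⟩
  have hinv : Tendsto (fun b : ℝ => b⁻¹) (𝓝[>] 0) atTop := tendsto_inv_nhdsGT_zero
  have hall : ∀ᶠ b in 𝓝[>] (0:ℝ), ∀ i, 1 ≤ s i * b⁻¹ :=
    eventually_all.2 fun i => (hinv.const_mul_atTop (s_pos hs i)).eventually_ge_atTop 1
  filter_upwards [self_mem_nhdsWithin, hall, (hinv.const_mul_atTop hs0).eventually_ge_atTop 1,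
    hinv.eventually_ge_atTop 1] with b hb h1 h2 h3 x hx
  have hb : 0 < b := hb
  obtain ⟨N, hN⟩ : ∃ N, N = b⁻¹ := ⟨_, rfl⟩
  have hNpos : 0 < N := by rw [hN]; positivity
  have hbd : b ^ (-(d:ℝ) / 2) = (√N) ^ d := by
    have : b = N⁻¹ := by rw [hN, inv_inv]
    rw [this, Real.inv_rpow hNpos.le, Real.sqrt_eq_rpow, ← Real.rpow_natCast, ← Real.rpow_mul hNpos.le,
      ← Real.rpow_neg hNpos.le]
    congr 1; ring
  rw [hbd, kappa_eq, cst]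
  simp only [← hN] at h1 h2 h3 ⊢
  obtain ⟨s0, hs0e⟩ : ∃ t, t = 1 - ∑ i, s i := ⟨_, rfl⟩
  rw [← hs0e] at hs0 c10 h2 ⊢
  have hx0 : 0 ≤ 1 - ∑ i, x i := by linarith [Sd_sum hx]
  have G0 := Gamma_pos_of_pos (show 0 < N + 1 by positivity)
  have G1 := Gamma_pos_of_pos (show 0 < s0 * N + 1 by positivity)
  have G2 : ∀ i, 0 < Gamma (s i * N + 1) := fun i => by
    have := s_pos hs i
    exact Gamma_pos_of_pos (by positivity)
  have t0 := term_bound hs0 hNpos h2 hx0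
  have tp : ∏ i, (x i ^ (s i * N) / Gamma (s i * N + 1)) ≤
      ∏ i, (2 * exp 1 / (√(s i) * √N) * N ^ (-(s i * N)) * exp (N * x i)) :=
    Finset.prod_le_prod (fun i _ => div_nonneg (rpow_nonneg (Sd_nonneg hx i) _) (G2 i).le)
      fun i _ => term_bound (s_pos hs i) hNpos (h1 i) (Sd_nonneg hx i)
  have tp0 : 0 ≤ ∏ i, (x i ^ (s i * N) / Gamma (s i * N + 1)) :=
    Finset.prod_nonneg fun i _ => div_nonneg (rpow_nonneg (Sd_nonneg hx i) _) (G2 i).le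
  have hprod : ∏ k ∈ Finset.range d, (N + 1 + k) ≤ ((d + 1) * N) ^ d := by
    calc ∏ k ∈ Finset.range d, (N + 1 + k) ≤ ∏ k ∈ Finset.range d, ((d + 1) * N) := by
          apply Finset.prod_le_prod
          · intro i _; positivity
          · intro i hi
            have : (i:ℝ) + 1 ≤ d := by exact_mod_cast Finset.mem_range.1 hi
            nlinarith [Nat.cast_nonneg (α := ℝ) d]
      _ = _ := by simp
  have hU := Gamma_upper h3
  have hlhs : Gamma (N + d + 1) / (Gamma (s0 * N + 1) * ∏ i, Gamma (s i * N + 1)) *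
      (1 - ∑ i, x i) ^ (s0 * N) * ∏ i, x i ^ (s i * N) = Gamma (N + 1) * (∏ k ∈ Finset.range d, (N + 1 + k)) *
      (((1 - ∑ i, x i) ^ (s0 * N) / Gamma (s0 * N + 1)) * ∏ i, (x i ^ (s i * N) / Gamma (s i * N + 1))) := by
    rw [Gamma_add_nat hNpos, Finset.prod_div_distrib]
    have : 0 < ∏ i, Gamma (s i * N + 1) := Finset.prod_pos fun i _ => G2 i
    field_simp
  rw [hlhs]
  have e1 : N ^ (-(s0 * N)) * ∏ i, N ^ (-(s i * N)) = N ^ (-N) := by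
    rw [← Real.rpow_sum_of_pos hNpos, ← Real.rpow_add hNpos]
    congr 1
    rw [Finset.sum_neg_distrib, ← Finset.sum_mul, hs0e]; ring
  have e2 : exp (N * (1 - ∑ i, x i)) * ∏ i, exp (N * x i) = exp N := by
    rw [← Real.exp_sum, ← Real.exp_add]
    congr 1
    rw [← Finset.mul_sum]; ring
  have e3 : (2 * exp 1 / (√s0 * √N) * N ^ (-(s0 * N)) * exp (N * (1 - ∑ i, x i))) *
      (∏ i, (2 * exp 1 / (√(s i) * √N) * N ^ (-(s i * N)) * exp (N * x i))) =
      (2 * exp 1) ^ (d + 1) / (√s0 * (∏ i, √(s i)) * √N ^ (d + 1)) * N ^ (-N) * exp N := by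
    rw [← e1, ← e2]
    simp only [Finset.prod_mul_distrib, Finset.prod_div_distrib, Finset.prod_const, Finset.card_univ,
      Fintype.card_fin]
    rw [pow_succ, pow_succ]
    field_simp
    rw [mul_pow]
  have a2 : 0 < √N := Real.sqrt_pos.2 hNpos
  calc _ ≤ (2 * exp 2 * (√N * N ^ N * exp (-N))) * (((d + 1) * N) ^ d) *
        ((2 * exp 1 / (√s0 * √N) * N ^ (-(s0 * N)) * exp (N * (1 - ∑ i, x i))) *
      (∏ i, (2 * exp 1 / (√(s i) * √N) * N ^ (-(s i * N)) * exp (N * x i)))) := by gcongr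
    _ = _ := by
      rw [e3, Real.exp_neg, Real.rpow_neg hNpos.le, mul_pow]
      have c12 : N ^ d = (√N) ^ d * (√N) ^ d := by
        rw [← mul_pow, Real.mul_self_sqrt hNpos.le]
      rw [c12]
      have : 0 < N ^ N := by positivity
      field_simp
      ring

end BB

namespace BB
variable {d : ℕ} {s : Fin d → ℝ}

lemma sum_uv (s : Fin d → ℝ) (b : ℝ) : (∑ j, (s j / b + 1)) + ((1 - ∑ j, s j) / b + 1) = 1 / b + d + 1 := by
  rw [Finset.sum_add_distrib, ← Finset.sum_div]; simp; ring

lemma kvar (hs : s ∈ SdInt d) (i : Fin d) :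
    Tendsto (fun b => ∫ x in Sd d, kappa d s b x * (x i - s i) ^ 2) (𝓝[>] 0) (𝓝 0) := by
  have h1 : Tendsto (fun b : ℝ => (s i + b) * (s i + 2 * b) / ((1 + (d + 1) * b) * (1 + (d + 2) * b)) -
      2 * s i * ((s i + b) / (1 + (d + 1) * b)) + s i ^ 2) (𝓝[>] 0) (𝓝 0) := by
    have : ContinuousAt (fun b : ℝ => (s i + b) * (s i + 2 * b) / ((1 + (d + 1) * b) * (1 + (d + 2) * b)) -
      2 * s i * ((s i + b) / (1 + (d + 1) * b)) + s i ^ 2) 0 := by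
      have e1 : (1 + ((d:ℝ) + 1) * 0) * (1 + ((d:ℝ) + 2) * 0) ≠ 0 := by simp
      have e2 : (1 + ((d:ℝ) + 1) * 0) ≠ 0 := by simp
      fun_prop (disch := assumption)
    have h2 := this.tendsto
    have e : (s i + 0) * (s i + 2 * 0) / ((1 + ((d:ℝ) + 1) * 0) * (1 + (d + 2) * 0)) -
      2 * s i * ((s i + 0) / (1 + (d + 1) * 0)) + s i ^ 2 = 0 := by simp; ring
    rw [e] at h2
    exact h2.mono_left nhdsWithin_le_nhds
  refine h1.congr' ?_
  filter_upwards [self_mem_nhdsWithin] with b hb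
  have hb : 0 < b := hb
  unfold kappa
  rw [(dirK_var (u_gt hs hb) (v_gt hs hb) i (s i)).2, sum_uv]
  field_simp
  ring

lemma kappa_int (hs : s ∈ SdInt d) {b : ℝ} (hb : 0 < b) : IntegrableOn (kappa d s b) (Sd d) :=
  integrableOn_dirK (u_gt hs hb) (v_gt hs hb)

lemma kappa_int1 (hs : s ∈ SdInt d) {b : ℝ} (hb : 0 < b) : ∫ x in Sd d, kappa d s b x = 1 :=
  integral_dirK (u_gt hs hb) (v_gt hs hb)

lemma kappa_nn (hs : s ∈ SdInt d) {b : ℝ} (hb : 0 < b) {x : Fin d → ℝ} (hx : x ∈ Sd d) :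
    0 ≤ kappa d s b x := dirK_nonneg (u_gt hs hb) (v_gt hs hb) hx

lemma kappa_meas (s : Fin d → ℝ) (b : ℝ) : Measurable (kappa d s b) := measurable_dirK _ _ _

lemma kappa_g_int (hs : s ∈ SdInt d) {b : ℝ} (hb : 0 < b) {g : (Fin d → ℝ) → ℝ} (hg : Measurable g)
    {M : ℝ} (hM : ∀ x ∈ Sd d, |g x| ≤ M) : IntegrableOn (fun x => kappa d s b x * g x) (Sd d) := by
  refine (kappa_int hs hb).mul_bdd (c := M) hg.aestronglyMeasurable ?_
  filter_upwards [ae_restrict_mem (measurableSet_Sd d)] with x hx using hM x hx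

lemma approx_id (hs : s ∈ SdInt d) {g : (Fin d → ℝ) → ℝ} (hg : Measurable g) {L M : ℝ} (hL : 0 ≤ L)
    (hM : ∀ x ∈ Sd d, |g x| ≤ M)
    (hgl : ∀ x ∈ Sd d, |g x - g s| ≤ L * ∑ i, |x i - s i|) :
    Tendsto (fun b => ∫ x in Sd d, kappa d s b x * g x) (𝓝[>] 0) (𝓝 (g s)) := by
  rw [Metric.tendsto_nhds]
  intro ε hε
  set e : ℝ := ε / (2 * (L * d + 1)) with he
  have hLd : 0 ≤ L * d := by positivity
  have he0 : 0 < e := by positivity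
  have hlt : L * (d * e + (∑ i : Fin d, (0:ℝ)) / e) < ε := by
    have : L * (d * e + (∑ i : Fin d, (0:ℝ)) / e) = (L * d) / (2 * (L * d + 1)) * ε := by
      rw [he]; simp; ring
    rw [this]
    have : (L * d) / (2 * (L * d + 1)) < 1 := by rw [div_lt_one (by positivity)]; linarith
    nlinarith
  have ht : Tendsto (fun b => L * (d * e + (∑ i, ∫ x in Sd d, kappa d s b x * (x i - s i) ^ 2) / e))
      (𝓝[>] 0) (𝓝 (L * (d * e + (∑ i : Fin d, (0:ℝ)) / e))) := by
    refine Tendsto.const_mul _ (Tendsto.const_add _ (Tendsto.div_const ?_ _))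
    exact tendsto_finsetSum _ fun i _ => kvar hs i
  filter_upwards [ht.eventually_lt_const hlt, self_mem_nhdsWithin] with b hb1 hb
  have hb : 0 < b := hb
  refine lt_of_le_of_lt ?_ hb1
  rw [Real.dist_eq]
  have hi := kappa_int hs hb
  have hv : ∀ i, IntegrableOn (fun x => kappa d s b x * (x i - s i) ^ 2) (Sd d) := fun i => (dirK_var (u_gt hs hb) (v_gt hs hb) i (s i)).1
  have e1 : (∫ x in Sd d, kappa d s b x * g x) - g s = ∫ x in Sd d, kappa d s b x * (g x - g s) := by
    simp only [mul_sub]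
    rw [integral_sub (kappa_g_int hs hb hg hM) (hi.mul_const _), integral_mul_const, kappa_int1 hs hb, one_mul]
  have e2 : L * (d * e + (∑ i, ∫ x in Sd d, kappa d s b x * (x i - s i) ^ 2) / e) =
      ∫ x in Sd d, L * (kappa d s b x * (d * e) + (∑ i, kappa d s b x * (x i - s i) ^ 2) / e) := by
    rw [integral_const_mul, integral_add (hi.mul_const _) ((integrable_finsetSum _ fun i _ => hv i).div_const _),
      integral_mul_const, kappa_int1 hs hb, integral_div, integral_finsetSum _ fun i _ => hv i, one_mul]
  rw [e1, e2, ← Real.norm_eq_abs]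
  refine norm_integral_le_of_norm_le ?_ ?_
  · exact (((hi.mul_const _).add ((integrable_finsetSum _ fun i _ => hv i).div_const _))).const_mul _
  · filter_upwards [ae_restrict_mem (measurableSet_Sd d)] with x hx
    rw [norm_mul, Real.norm_eq_abs, Real.norm_eq_abs, abs_of_nonneg (kappa_nn hs hb hx)]
    have hk := kappa_nn hs hb hx
    have h3 : ∑ i, |x i - s i| ≤ d * e + (∑ i, (x i - s i) ^ 2) / e := by
      have : d * e + (∑ i, (x i - s i) ^ 2) / e = ∑ i, (e + (x i - s i) ^ 2 / e) := by
        rw [Finset.sum_add_distrib, Finset.sum_div]; simp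
      rw [this]
      refine Finset.sum_le_sum fun i _ => ?_
      rw [← sq_abs]
      set t := |x i - s i|
      have : e + t ^ 2 / e = (e ^ 2 + t ^ 2) / e := by field_simp
      rw [this, le_div_iff₀ he0]
      nlinarith [sq_nonneg (e - t)]
    calc kappa d s b x * |g x - g s| ≤ kappa d s b x * (L * (d * e + (∑ i, (x i - s i) ^ 2) / e)) := by
          gcongr
          exact (hgl x hx).trans (by gcongr)
      _ = _ := by rw [← Finset.mul_sum]; ring

lemma approx_sq (hs : s ∈ SdInt d) {g : (Fin d → ℝ) → ℝ} (hg : Measurable g) {L M : ℝ} (hL : 0 ≤ L)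
    (hM : ∀ x ∈ Sd d, |g x| ≤ M)
    (hgl : ∀ x ∈ Sd d, |g x - g s| ≤ L * ∑ i, |x i - s i|) :
    Tendsto (fun b => b ^ ((d:ℝ)/2) * ∫ x in Sd d, kappa d s b x ^ 2 * g x) (𝓝[>] 0) (𝓝 (psiFun d s * g s)) := by
  have h1 := approx_id hs hg hL hM hgl
  have h2 : Tendsto (fun b : ℝ => b / 2) (𝓝[>] 0) (𝓝[>] 0) := by
    refine tendsto_nhdsWithin_iff.2 ⟨?_, ?_⟩
    · have : Tendsto (fun b : ℝ => b / 2) (𝓝 0) (𝓝 (0 / 2)) := by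
        exact tendsto_id.div_const 2
      rw [zero_div] at this
      exact this.mono_left nhdsWithin_le_nhds
    · filter_upwards [self_mem_nhdsWithin] with b hb
      exact half_pos (show (0:ℝ) < b from hb)
  refine ((tendsto_Afun hs).mul (h1.comp h2)).congr' ?_
  filter_upwards [self_mem_nhdsWithin] with b hb
  have hb : 0 < b := hb
  simp only [Function.comp]
  rw [mul_assoc, ← integral_const_mul]
  congr 1
  refine setIntegral_congr_fun (measurableSet_Sd d) fun x hx => ?_
  rw [kappa_sq hs hb hx]; ring

end BB

namespace BB

lemma cov_step {Ω : Type*} {F m0 : MeasurableSpace Ω} (hF : F ≤ m0) (P : Measure Ω) [IsProbabilityMeasure P]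
    {Y Z : Ω → ℝ} (hY : StronglyMeasurable[F] Y) (hY1 : ∀ ω, |Y ω| ≤ 1) (hZ : Integrable Z P) :
    ∃ A, MeasurableSet[F] A ∧
      |∫ ω, Y ω * Z ω ∂P - (∫ ω, Y ω ∂P) * ∫ ω, Z ω ∂P| ≤
        2 * (∫ ω in A, Z ω ∂P - P.real A * ∫ ω, Z ω ∂P) := by
  set c := ∫ ω, Z ω ∂P with hc
  set W : Ω → ℝ := fun ω => Z ω - c with hW
  have hWi : Integrable W P := hZ.sub (integrable_const _)
  have hYm : AEStronglyMeasurable Y P := (hY.mono hF).aestronglyMeasurable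
  have hYi : Integrable Y P := by
    refine Integrable.of_bound hYm 1 (ae_of_all _ hY1)
  have hYW : Integrable (Y * W) P := hWi.bdd_mul (c := 1) hYm (ae_of_all _ hY1)
  have hYZ : Integrable (fun ω => Y ω * Z ω) P := hZ.bdd_mul (c := 1) hYm (ae_of_all _ hY1)
  set V := P[W|F] with hV
  have hVm : StronglyMeasurable[F] V := stronglyMeasurable_condExp
  have hVi : Integrable V P := integrable_condExp
  have hA : MeasurableSet[F] {ω | 0 ≤ V ω} := hVm.measurable measurableSet_Ici
  refine ⟨{ω | 0 ≤ V ω}, hA, ?_⟩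
  have hA' := hF _ hA
  have e1 : ∫ ω, Y ω * Z ω ∂P - (∫ ω, Y ω ∂P) * c = ∫ ω, Y ω * V ω ∂P := by
    have : ∫ ω, Y ω * V ω ∂P = ∫ ω, (Y * W) ω ∂P := by
      rw [← integral_condExp hF (f := Y * W)]
      refine integral_congr_ae ?_
      exact (condExp_mul_of_stronglyMeasurable_left hY hYW hWi).symm
    rw [this]
    simp only [hW, Pi.mul_apply, mul_sub]
    rw [integral_sub hYZ (hYi.mul_const _), integral_mul_const]
  have e2 : ∫ ω in {ω | 0 ≤ V ω}, V ω ∂P = ∫ ω in {ω | 0 ≤ V ω}, Z ω ∂P - P.real {ω | 0 ≤ V ω} * c := by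
    rw [setIntegral_condExp hF hWi hA]
    simp only [hW]
    rw [integral_sub hZ.integrableOn (integrable_const _)]
    simp
  have e3 : ∫ ω, V ω ∂P = 0 := by
    rw [hV, integral_condExp hF]
    simp only [hW]
    rw [integral_sub hZ (integrable_const _)]
    simp [hc]
  rw [e1, ← e2]
  have e4 : ∫ ω, |V ω| ∂P = 2 * ∫ ω in {ω | 0 ≤ V ω}, V ω ∂P := by
    have h1 := integral_add_compl hA' hVi
    have h2 := integral_add_compl hA' hVi.abs
    have h3 : ∫ ω in {ω | 0 ≤ V ω}, |V ω| ∂P = ∫ ω in {ω | 0 ≤ V ω}, V ω ∂P :=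
      setIntegral_congr_fun hA' fun ω hω => abs_of_nonneg hω
    have h4 : ∫ ω in {ω | 0 ≤ V ω}ᶜ, |V ω| ∂P = - ∫ ω in {ω | 0 ≤ V ω}ᶜ, V ω ∂P := by
      rw [← integral_neg]
      refine setIntegral_congr_fun hA'.compl fun ω hω => abs_of_neg (not_le.1 hω)
    linarith
  rw [← e4, ← Real.norm_eq_abs]
  refine norm_integral_le_of_norm_le hVi.abs (ae_of_all _ fun ω => ?_)
  rw [norm_mul]
  calc ‖Y ω‖ * ‖V ω‖ ≤ 1 * ‖V ω‖ := by gcongr; exact hY1 ω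
    _ = _ := by simp

def AlphaBd {Ω : Type*} (F G : MeasurableSpace Ω) {m0 : MeasurableSpace Ω} (P : Measure Ω) (a : ℝ) : Prop :=
  ∀ A B, MeasurableSet[F] A → MeasurableSet[G] B → |P.real (A ∩ B) - P.real A * P.real B| ≤ a

lemma cov_ineq {Ω : Type*} {F G m0 : MeasurableSpace Ω} (hF : F ≤ m0) (hG : G ≤ m0)
    (P : Measure Ω) [IsProbabilityMeasure P] {a : ℝ} (ha : AlphaBd F G P a)
    {Y Z : Ω → ℝ} (hY : StronglyMeasurable[F] Y) (hY1 : ∀ ω, |Y ω| ≤ 1)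
    (hZ : StronglyMeasurable[G] Z) (hZ1 : ∀ ω, |Z ω| ≤ 1) :
    |∫ ω, Y ω * Z ω ∂P - (∫ ω, Y ω ∂P) * ∫ ω, Z ω ∂P| ≤ 4 * a := by
  have hZi : Integrable Z P := Integrable.of_bound (hZ.mono hG).aestronglyMeasurable 1 (ae_of_all _ hZ1)
  obtain ⟨A, hA, h1⟩ := cov_step hF P hY hY1 hZi
  have hA' := hF _ hA
  have hIi : Integrable (A.indicator (fun _ => (1:ℝ))) P := (integrable_const _).indicator hA'
  obtain ⟨B, hB, h2⟩ := cov_step hG P hZ hZ1 hIi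
  have hB' := hG _ hB
  have e1 : ∫ ω, Z ω * A.indicator (fun _ => (1:ℝ)) ω ∂P = ∫ ω in A, Z ω ∂P := by
    rw [← integral_indicator hA']
    congr 1; ext ω
    by_cases h : ω ∈ A <;> simp [h]
  have e2 : ∫ ω, A.indicator (fun _ => (1:ℝ)) ω ∂P = P.real A := by
    rw [integral_indicator hA']; simp
  have e3 : ∫ ω in B, A.indicator (fun _ => (1:ℝ)) ω ∂P = P.real (A ∩ B) := by
    rw [integral_indicator hA', Measure.restrict_restrict hA']; simp
  rw [e1, e2, e3] at h2
  have h3 := ha A B hA hB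
  have h4 := (abs_le.1 h3).2
  have h5 := (abs_le.1 h2).2
  linarith

lemma cov_ineq_complex {Ω : Type*} {F G m0 : MeasurableSpace Ω} (hF : F ≤ m0) (hG : G ≤ m0)
    (P : Measure Ω) [IsProbabilityMeasure P] {a : ℝ} (ha : AlphaBd F G P a)
    {Y Z : Ω → ℂ} (hY : StronglyMeasurable[F] Y) (hY1 : ∀ ω, ‖Y ω‖ ≤ 1)
    (hZ : StronglyMeasurable[G] Z) (hZ1 : ∀ ω, ‖Z ω‖ ≤ 1) :
    ‖∫ ω, Y ω * Z ω ∂P - (∫ ω, Y ω ∂P) * ∫ ω, Z ω ∂P‖ ≤ 16 * a := by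
  have hYm := (hY.mono hF).aestronglyMeasurable (μ := P)
  have hZm := (hZ.mono hG).aestronglyMeasurable (μ := P)
  have hYi : Integrable Y P := Integrable.of_bound hYm 1 (ae_of_all _ hY1)
  have hZi : Integrable Z P := Integrable.of_bound hZm 1 (ae_of_all _ hZ1)
  have hYr : StronglyMeasurable[F] fun ω => (Y ω).re := Complex.continuous_re.comp_stronglyMeasurable hY
  have hYI : StronglyMeasurable[F] fun ω => (Y ω).im := Complex.continuous_im.comp_stronglyMeasurable hY
  have hZr : StronglyMeasurable[G] fun ω => (Z ω).re := Complex.continuous_re.comp_stronglyMeasurable hZ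
  have hZI : StronglyMeasurable[G] fun ω => (Z ω).im := Complex.continuous_im.comp_stronglyMeasurable hZ
  have bYr : ∀ ω, |(Y ω).re| ≤ 1 := fun ω => (Complex.abs_re_le_norm _).trans (hY1 ω)
  have bYI : ∀ ω, |(Y ω).im| ≤ 1 := fun ω => (Complex.abs_im_le_norm _).trans (hY1 ω)
  have bZr : ∀ ω, |(Z ω).re| ≤ 1 := fun ω => (Complex.abs_re_le_norm _).trans (hZ1 ω)
  have bZI : ∀ ω, |(Z ω).im| ≤ 1 := fun ω => (Complex.abs_im_le_norm _).trans (hZ1 ω)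
  have h1 := cov_ineq hF hG P ha hYr bYr hZr bZr
  have h2 := cov_ineq hF hG P ha hYr bYr hZI bZI
  have h3 := cov_ineq hF hG P ha hYI bYI hZr bZr
  have h4 := cov_ineq hF hG P ha hYI bYI hZI bZI
  have hYZ : Integrable (fun ω => Y ω * Z ω) P := hZi.bdd_mul (c := 1) hYm (ae_of_all _ hY1)
  have i1 : Integrable (fun ω => (Y ω).re * (Z ω).re) P :=
    hZi.re.bdd_mul (c := 1) (hYr.mono hF).aestronglyMeasurable (ae_of_all _ bYr)
  have i2 : Integrable (fun ω => (Y ω).re * (Z ω).im) P :=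
    hZi.im.bdd_mul (c := 1) (hYr.mono hF).aestronglyMeasurable (ae_of_all _ bYr)
  have i3 : Integrable (fun ω => (Y ω).im * (Z ω).re) P :=
    hZi.re.bdd_mul (c := 1) (hYI.mono hF).aestronglyMeasurable (ae_of_all _ bYI)
  have i4 : Integrable (fun ω => (Y ω).im * (Z ω).im) P :=
    hZi.im.bdd_mul (c := 1) (hYI.mono hF).aestronglyMeasurable (ae_of_all _ bYI)
  have r (W : Ω → ℂ) (h : Integrable W P) : (∫ ω, W ω ∂P).re = ∫ ω, (W ω).re ∂P := (integral_re h).symm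
  have im (W : Ω → ℂ) (h : Integrable W P) : (∫ ω, W ω ∂P).im = ∫ ω, (W ω).im ∂P := (integral_im h).symm
  refine (Complex.norm_le_abs_re_add_abs_im _).trans ?_
  rw [Complex.sub_re, Complex.sub_im, Complex.mul_re, Complex.mul_im, r _ hYZ, im _ hYZ, r _ hYi, im _ hYi,
    r _ hZi, im _ hZi]
  simp only [Complex.mul_re, Complex.mul_im]
  rw [integral_sub i1 i4, integral_add i2 i3]
  rw [abs_le] at h1 h2 h3 h4
  have g1 : |∫ ω, (Y ω).re * (Z ω).re ∂P - ∫ ω, (Y ω).im * (Z ω).im ∂P -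
      ((∫ ω, (Y ω).re ∂P) * (∫ ω, (Z ω).re ∂P) - (∫ ω, (Y ω).im ∂P) * (∫ ω, (Z ω).im ∂P))| ≤ 8 * a := by
    rw [abs_le]; constructor <;> linarith [h1.1, h1.2, h4.1, h4.2]
  have g2 : |∫ ω, (Y ω).re * (Z ω).im ∂P + ∫ ω, (Y ω).im * (Z ω).re ∂P -
      ((∫ ω, (Y ω).re ∂P) * (∫ ω, (Z ω).im ∂P) + (∫ ω, (Y ω).im ∂P) * (∫ ω, (Z ω).re ∂P))| ≤ 8 * a := by
    rw [abs_le]; constructor <;> linarith [h2.1, h2.2, h3.1, h3.2]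
  linarith

lemma prod_ineq {Ω : Type*} {m0 : MeasurableSpace Ω} (P : Measure Ω) [IsProbabilityMeasure P] {a : ℝ} (ha0 : 0 ≤ a)
    (F G : ℕ → MeasurableSpace Ω) (hF : ∀ j, F j ≤ m0) (hG : ∀ j, G j ≤ m0)
    (ha : ∀ j, 1 ≤ j → AlphaBd (F j) (G j) P a)
    {Y : ℕ → Ω → ℂ} (hY1 : ∀ j ω, ‖Y j ω‖ ≤ 1)
    (hYF : ∀ i j, i < j → StronglyMeasurable[F j] (Y i))
    (hYG : ∀ j, StronglyMeasurable[G j] (Y j)) (k : ℕ) :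
    ‖∫ ω, ∏ i ∈ Finset.range k, Y i ω ∂P - ∏ i ∈ Finset.range k, ∫ ω, Y i ω ∂P‖ ≤ k * (16 * a) := by
  induction k with
  | zero => simp
  | succ k ih =>
    rcases Nat.eq_zero_or_pos k with hk | hk
    · subst hk; simp; positivity
    have hp : StronglyMeasurable[F k] fun ω => ∏ i ∈ Finset.range k, Y i ω :=
      Finset.stronglyMeasurable_fun_prod _ fun i hi => hYF i k (Finset.mem_range.1 hi)
    have hp1 : ∀ ω, ‖∏ i ∈ Finset.range k, Y i ω‖ ≤ 1 := fun ω => by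
      rw [norm_prod]
      exact Finset.prod_le_one (fun _ _ => norm_nonneg _) fun i _ => hY1 i ω
    have h1 := cov_ineq_complex (hF k) (hG k) P (ha k hk) hp hp1 (hYG k) (hY1 k)
    have h2 : ‖∫ ω, Y k ω ∂P‖ ≤ 1 := by
      have := norm_integral_le_of_norm_le_const (μ := P) (ae_of_all _ (hY1 k)); simpa using this
    simp only [Finset.prod_range_succ]
    have h3 := norm_sub_le_norm_sub_add_norm_sub (∫ ω, (∏ i ∈ Finset.range k, Y i ω) * Y k ω ∂P)
      ((∫ ω, (∏ i ∈ Finset.range k, Y i ω) ∂P) * ∫ ω, Y k ω ∂P)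
      ((∏ i ∈ Finset.range k, ∫ ω, Y i ω ∂P) * ∫ ω, Y k ω ∂P)
    refine h3.trans ?_
    rw [← sub_mul (∫ ω, (∏ i ∈ Finset.range k, Y i ω) ∂P), norm_mul]
    have h4 : ‖∫ ω, ∏ i ∈ Finset.range k, Y i ω ∂P - ∏ i ∈ Finset.range k, ∫ ω, Y i ω ∂P‖ *
      ‖∫ ω, Y k ω ∂P‖ ≤ k * (16 * a) * 1 := by gcongr
    push_cast
    linarith

end BB

namespace BB
variable {Ω : Type*} [m0 : MeasurableSpace Ω] {d : ℕ}

def past (X : ℕ → Ω → (Fin d → ℝ)) (k : ℕ) : MeasurableSpace Ω :=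
  ⨆ i ∈ Set.Icc 1 k, MeasurableSpace.comap (X i) inferInstance
def fut (X : ℕ → Ω → (Fin d → ℝ)) (k : ℕ) : MeasurableSpace Ω :=
  ⨆ i ∈ Set.Ici k, MeasurableSpace.comap (X i) inferInstance

lemma past_le {X : ℕ → Ω → (Fin d → ℝ)} (hX : ∀ i, Measurable (X i)) (k : ℕ) : past X k ≤ m0 :=
  iSup₂_le fun i _ => (hX i).comap_le
lemma fut_le {X : ℕ → Ω → (Fin d → ℝ)} (hX : ∀ i, Measurable (X i)) (k : ℕ) : fut X k ≤ m0 :=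
  iSup₂_le fun i _ => (hX i).comap_le

lemma past_meas (X : ℕ → Ω → (Fin d → ℝ)) {k i : ℕ} (h1 : 1 ≤ i) (h2 : i ≤ k) : Measurable[past X k] (X i) := by
  have : MeasurableSpace.comap (X i) inferInstance ≤ past X k :=
    le_iSup₂_of_le (f := fun i (_ : i ∈ Set.Icc 1 k) => MeasurableSpace.comap (X i) inferInstance) i ⟨h1, h2⟩ le_rfl
  exact (comap_measurable (X i)).mono this le_rfl
lemma fut_meas (X : ℕ → Ω → (Fin d → ℝ)) {k i : ℕ} (h1 : k ≤ i) : Measurable[fut X k] (X i) := by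
  have : MeasurableSpace.comap (X i) inferInstance ≤ fut X k :=
    le_iSup₂_of_le (f := fun i (_ : i ∈ Set.Ici k) => MeasurableSpace.comap (X i) inferInstance) i h1 le_rfl
  exact (comap_measurable (X i)).mono this le_rfl

variable (P : Measure Ω) [IsProbabilityMeasure P]

lemma aux_le_one (A B : Set Ω) : |P.real (A ∩ B) - P.real A * P.real B| ≤ 1 := by
  have h1 : P.real (A ∩ B) ≤ 1 := measureReal_le_one
  have h2 : P.real A ≤ 1 := measureReal_le_one
  have h3 : P.real B ≤ 1 := measureReal_le_one
  have h4 : 0 ≤ P.real (A ∩ B) := measureReal_nonneg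
  have h5 : 0 ≤ P.real A := measureReal_nonneg
  have h6 : 0 ≤ P.real B := measureReal_nonneg
  rw [abs_le]; constructor <;> nlinarith

lemma alpha_bd (X : ℕ → Ω → (Fin d → ℝ)) {k : ℕ} (hk : 1 ≤ k) (m : ℕ) :
    AlphaBd (past X k) (fut X (k + m)) P (alphaMix P X m) := by
  intro A B hA hB
  refine le_csSup ⟨1, ?_⟩ ⟨k, hk, A, B, hA, hB, rfl⟩
  rintro r ⟨k, -, A, B, -, -, rfl⟩
  exact aux_le_one P A B

lemma alpha_nonneg (X : ℕ → Ω → (Fin d → ℝ)) (m : ℕ) : 0 ≤ alphaMix P X m := by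
  have := alpha_bd P X le_rfl m ∅ ∅ (@MeasurableSet.empty _ (_)) (@MeasurableSet.empty _ (_))
  exact (abs_nonneg _).trans this

lemma alpha_le_one (X : ℕ → Ω → (Fin d → ℝ)) (m : ℕ) : alphaMix P X m ≤ 1 := by
  refine Real.sSup_le ?_ zero_le_one
  rintro r ⟨k, -, A, B, -, -, rfl⟩
  exact aux_le_one P A B

lemma alpha_pow (X : ℕ → Ω → (Fin d → ℝ)) {ν : ℝ} (hν : 0 < ν)
    (hA3 : (fun m : ℕ => alphaMix P X m) =O[atTop] fun m : ℕ => (m : ℝ) ^ (-ν)) :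
    ∃ C : ℝ, 0 < C ∧ ∀ m : ℕ, 1 ≤ m → alphaMix P X m ≤ C * (m : ℝ) ^ (-ν) := by
  obtain ⟨c, hc, h⟩ := hA3.exists_pos
  rw [isBigOWith_iff] at h
  obtain ⟨N, hN⟩ := eventually_atTop.1 h
  refine ⟨c + ((N:ℝ) + 1) ^ ν, by positivity, fun m hm => ?_⟩
  have hm' : (0:ℝ) < m := by exact_mod_cast hm
  by_cases hmN : N ≤ m
  · have := hN m hmN
    rw [Real.norm_eq_abs, Real.norm_eq_abs, abs_of_nonneg (alpha_nonneg P X m),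
      abs_of_nonneg (by positivity)] at this
    refine this.trans ?_
    gcongr
    have : (0:ℝ) ≤ ((N:ℝ) + 1) ^ ν := by positivity
    linarith
  · push Not at hmN
    refine (alpha_le_one P X m).trans ?_
    have h1 : (m:ℝ) ^ ν ≤ ((N:ℝ) + 1) ^ ν := by
      refine Real.rpow_le_rpow hm'.le ?_ hν.le
      have : (m:ℝ) ≤ N := by exact_mod_cast hmN.le
      linarith
    rw [Real.rpow_neg hm'.le, ← div_eq_mul_inv, le_div_iff₀ (by positivity)]
    linarith

end BB

namespace BB
open scoped ENNReal

lemma holder_aux {E : Type*} [MeasurableSpace E] (v : Measure E) [SigmaFinite v] {k : E → ℝ≥0∞} (hk : Measurable k)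
    {M C : ℝ≥0∞} (hM0 : M ≠ ∞) (hM : ∀ᵐ x ∂v, k x ≤ M) (hk1 : ∫⁻ x, k x ∂v ≤ 1)
    {p : ℝ} (hp : 1 < p) {a : E × E → ℝ≥0∞} (ha : AEMeasurable a (v.prod v))
    (hC : (∫⁻ z, a z ^ p ∂(v.prod v)) ^ (1 / p) ≤ C) :
    ∫⁻ z, a z * (k z.1 * k z.2) ∂(v.prod v) ≤ C * M ^ (2 / p) := by
  set q := p.conjExponent
  have hpq : p.HolderConjugate q := Real.HolderConjugate.conjExponent hp
  have hq1 : 1 < q := hpq.symm.lt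
  have hK : Measurable fun z : E × E => k z.1 * k z.2 := by fun_prop
  refine (ENNReal.lintegral_mul_le_Lp_mul_Lq _ hpq ha hK.aemeasurable).trans ?_
  refine mul_le_mul' hC ?_
  have h1 : ∫⁻ x, k x ^ q ∂v ≤ M ^ (q - 1) := by
    calc ∫⁻ x, k x ^ q ∂v ≤ ∫⁻ x, M ^ (q - 1) * k x ∂v := by
          refine lintegral_mono_ae ?_
          filter_upwards [hM] with x hx
          calc k x ^ q = k x ^ (q - 1) * k x := by
                have := ENNReal.rpow_add_of_nonneg (x := k x) (q - 1) 1 (by linarith) zero_le_one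
                simpa using this
            _ ≤ _ := by gcongr
      _ = M ^ (q - 1) * ∫⁻ x, k x ∂v := lintegral_const_mul _ hk
      _ ≤ M ^ (q - 1) * 1 := by gcongr
      _ = _ := mul_one _
  have h2 : ∫⁻ z, (k z.1 * k z.2) ^ q ∂(v.prod v) ≤ M ^ (2 * (q - 1)) := by
    calc ∫⁻ z, (k z.1 * k z.2) ^ q ∂(v.prod v) = ∫⁻ z, k z.1 ^ q * k z.2 ^ q ∂(v.prod v) := by
          refine lintegral_congr fun z => ENNReal.mul_rpow_of_nonneg _ _ (by linarith)
      _ = (∫⁻ x, k x ^ q ∂v) * ∫⁻ x, k x ^ q ∂v :=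
          lintegral_prod_mul (hk.pow_const _).aemeasurable (hk.pow_const _).aemeasurable
      _ ≤ M ^ (q - 1) * M ^ (q - 1) := by gcongr
      _ = _ := by rw [← ENNReal.rpow_add_of_nonneg _ _ (by linarith) (by linarith)]; congr 1; ring
  calc (∫⁻ z, (k z.1 * k z.2) ^ q ∂(v.prod v)) ^ (1 / q) ≤ (M ^ (2 * (q - 1))) ^ (1 / q) := by gcongr
    _ = M ^ (2 / p) := by
      rw [← ENNReal.rpow_mul]; congr 1
      have h0 := hpq.inv_add_inv_eq_one
      have hp0 : 0 < p := by linarith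
      have hq0 : 0 < q := by linarith
      field_simp at h0 ⊢
      linarith

lemma cov_A2 {Ω : Type*} [MeasurableSpace Ω] (P : Measure Ω) [IsProbabilityMeasure P] {d : ℕ}
    {Y Z : Ω → (Fin d → ℝ)} (hY : Measurable Y) (hZ : Measurable Z)
    (hYv : ∀ ω, Y ω ∈ Sd d) (hZv : ∀ ω, Z ω ∈ Sd d)
    {f : (Fin d → ℝ) → ℝ} (hf : Measurable f)
    (hYl : Measure.map Y P = volume.withDensity fun x => ENNReal.ofReal (f x))
    (hZl : Measure.map Z P = volume.withDensity fun x => ENNReal.ofReal (f x))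
    {fp : (Fin d → ℝ) × (Fin d → ℝ) → ℝ}
    (hJ : Measure.map (fun ω => (Y ω, Z ω)) P = volume.withDensity (fun z => ENNReal.ofReal (fp z)))
    {p C : ℝ} (hp : 1 < p)
    (hi : Integrable (fun z => |fp z - f z.1 * f z.2| ^ p) (volume.restrict (Sd d ×ˢ Sd d)))
    (hC0 : 0 ≤ C) (hC : (∫ z in Sd d ×ˢ Sd d, |fp z - f z.1 * f z.2| ^ p) ^ (1 / p) ≤ C)
    {k : (Fin d → ℝ) → ℝ} (hk : Measurable k) (hk0 : ∀ x ∈ Sd d, 0 ≤ k x) {M : ℝ} (hM0 : 0 ≤ M)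
    (hM : ∀ x ∈ Sd d, k x ≤ M) (hk1 : ∫⁻ x in Sd d, ENNReal.ofReal (k x) ≤ 1) :
    |∫ ω, k (Y ω) * k (Z ω) ∂P - (∫ ω, k (Y ω) ∂P) * ∫ ω, k (Z ω) ∂P| ≤ C * M ^ (2 / p) := by
  have hp0 : 0 < p := by linarith
  have mS := measurableSet_Sd d
  have mS2 : MeasurableSet (Sd d ×ˢ Sd d) := mS.prod mS
  set v : Measure (Fin d → ℝ) := volume.restrict (Sd d) with hv
  have hvv : v.prod v = volume.restrict (Sd d ×ˢ Sd d) := by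
    rw [hv, Measure.prod_restrict]; rfl
  set h : (Fin d → ℝ) × (Fin d → ℝ) → ℝ := fun z => |fp z - f z.1 * f z.2| with hh
  have hhm : AEMeasurable h (v.prod v) := by
    rw [hvv]
    have := hi.aestronglyMeasurable.aemeasurable.pow_const (1 / p)
    refine this.congr (ae_of_all _ fun z => ?_)
    simp only [hh]
    rw [← Real.rpow_mul (abs_nonneg _), mul_one_div_cancel hp0.ne', Real.rpow_one]
  set a : (Fin d → ℝ) × (Fin d → ℝ) → ℝ≥0∞ := fun z => ENNReal.ofReal (h z) with ha
  have ham : AEMeasurable a (v.prod v) := hhm.ennreal_ofReal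
  have haC : (∫⁻ z, a z ^ p ∂(v.prod v)) ^ (1 / p) ≤ ENNReal.ofReal C := by
    have e1 : ∫⁻ z, a z ^ p ∂(v.prod v) = ENNReal.ofReal (∫ z in Sd d ×ˢ Sd d, |fp z - f z.1 * f z.2| ^ p) := by
      rw [hvv, ofReal_integral_eq_lintegral_ofReal hi (ae_of_all _ fun z => by positivity)]
      refine lintegral_congr fun z => ?_
      rw [ha]; simp only
      rw [ENNReal.ofReal_rpow_of_nonneg (abs_nonneg _) hp0.le]
    rw [e1, ENNReal.ofReal_rpow_of_nonneg (by positivity) (by positivity)]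
    exact ENNReal.ofReal_le_ofReal hC
  set κ : (Fin d → ℝ) → ℝ≥0∞ := fun x => ENNReal.ofReal (k x) with hκ
  have hκm : Measurable κ := hk.ennreal_ofReal
  have hH := holder_aux v hκm (M := ENNReal.ofReal M) ENNReal.ofReal_ne_top
    (by filter_upwards [ae_restrict_mem mS] with x hx using ENNReal.ofReal_le_ofReal (hM x hx)) hk1 hp ham haC
  set μ := Measure.map Y P with hμ
  have hμp : IsProbabilityMeasure μ := Measure.isProbabilityMeasure_map hY.aemeasurable
  set J := Measure.map (fun ω => (Y ω, Z ω)) P with hJd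
  have hYZ : Measurable fun ω => (Y ω, Z ω) := hY.prodMk hZ
  set T : Set (Fin d → ℝ) := Sd d ∩ {x | 0 < f x} with hT
  have mT : MeasurableSet T := mS.inter (measurableSet_lt measurable_const hf)
  have hff : Measurable fun z : (Fin d → ℝ) × (Fin d → ℝ) => ENNReal.ofReal (f z.1 * f z.2) := by fun_prop
  have hμT : μ Tᶜ = 0 := by
    have h1 : Tᶜ ⊆ (Sd d)ᶜ ∪ {x | f x ≤ 0} := by
      intro x hx
      by_cases h : x ∈ Sd d
      · right; by_contra h'; exact hx ⟨h, by simpa using h'⟩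
      · left; exact h
    refine measure_mono_null h1 (measure_union_null ?_ ?_)
    · rw [hμ, Measure.map_apply hY mS.compl]
      convert measure_empty (μ := P)
      ext ω; simp [hYv ω]
    · rw [hYl, withDensity_apply _ (measurableSet_le hf measurable_const)]
      refine setLIntegral_eq_zero (measurableSet_le hf measurable_const) fun x hx => ?_
      exact ENNReal.ofReal_of_nonpos hx
  have hJT : J (T ×ˢ T)ᶜ = 0 := by
    have h1 : (T ×ˢ T)ᶜ ⊆ (Prod.fst ⁻¹' Tᶜ) ∪ (Prod.snd ⁻¹' Tᶜ) := by
      rintro ⟨x, y⟩ hxy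
      simp only [Set.mem_compl_iff, Set.mem_prod, not_and_or] at hxy
      exact hxy
    refine measure_mono_null h1 (measure_union_null ?_ ?_)
    · rw [hJd, Measure.map_apply hYZ (measurable_fst mT.compl)]
      have := hμT; rw [hμ, Measure.map_apply hY mT.compl] at this; exact this
    · rw [hJd, Measure.map_apply hYZ (measurable_snd mT.compl)]
      have := hμT; rw [hYl, ← hZl, Measure.map_apply hZ mT.compl] at this; exact this
  have hμμT : (μ.prod μ) (T ×ˢ T)ᶜ = 0 := by
    have h1 : (T ×ˢ T)ᶜ ⊆ (Prod.fst ⁻¹' Tᶜ) ∪ (Prod.snd ⁻¹' Tᶜ) := by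
      rintro ⟨x, y⟩ hxy
      simp only [Set.mem_compl_iff, Set.mem_prod, not_and_or] at hxy
      exact hxy
    refine measure_mono_null h1 (measure_union_null ?_ ?_)
    · have := (measurePreserving_fst (μ := μ) (ν := μ)).measure_preimage mT.compl.nullMeasurableSet
      rw [this]; exact hμT
    · have := (measurePreserving_snd (μ := μ) (ν := μ)).measure_preimage mT.compl.nullMeasurableSet
      rw [this]; exact hμT
  have hcut (ρ : Measure ((Fin d → ℝ) × (Fin d → ℝ))) (h0 : ρ (T ×ˢ T)ᶜ = 0) (A) : ρ A = ρ (A ∩ T ×ˢ T) := by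
    refine le_antisymm ?_ (measure_mono Set.inter_subset_left)
    calc ρ A ≤ ρ ((A ∩ T ×ˢ T) ∪ (T ×ˢ T)ᶜ) := measure_mono fun z hz => by
            by_cases h : z ∈ T ×ˢ T
            · left; exact ⟨hz, h⟩
            · right; exact h
      _ ≤ ρ (A ∩ T ×ˢ T) + ρ (T ×ˢ T)ᶜ := measure_union_le _ _
      _ = _ := by rw [h0, add_zero]
  have mT2 : MeasurableSet (T ×ˢ T) := mT.prod mT
  have hTS : T ×ˢ T ⊆ Sd d ×ˢ Sd d := Set.prod_mono Set.inter_subset_left Set.inter_subset_left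
  have hμμ : μ.prod μ = volume.withDensity (fun z => ENNReal.ofReal (f z.1) * ENNReal.ofReal (f z.2)) := by
    rw [hYl, prod_withDensity hf.ennreal_ofReal hf.ennreal_ofReal]; rfl
  set H := (v.prod v).withDensity a with hHd
  have hHA {A} (hA : MeasurableSet A) : ∫⁻ z in A ∩ T ×ˢ T, a z ≤ H A := by
    rw [hHd, withDensity_apply _ hA, hvv, Measure.restrict_restrict hA]
    exact lintegral_mono_set (Set.inter_subset_inter_right _ hTS)
  have hJA {A} (hA : MeasurableSet A) : J A = ∫⁻ z in A ∩ T ×ˢ T, ENNReal.ofReal (fp z) := by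
    rw [hcut J hJT A, hJ, withDensity_apply _ (hA.inter mT2)]
  have hμA {A} (hA : MeasurableSet A) : (μ.prod μ) A = ∫⁻ z in A ∩ T ×ˢ T, ENNReal.ofReal (f z.1 * f z.2) := by
    rw [hcut _ hμμT A, hμμ, withDensity_apply _ (hA.inter mT2)]
    refine setLIntegral_congr_fun (hA.inter mT2) fun z hz => ?_
    exact (ENNReal.ofReal_mul hz.2.1.2.le).symm
  have le1 : J ≤ μ.prod μ + H := by
    refine Measure.le_iff.2 fun A hA => ?_
    rw [Measure.add_apply, hJA hA, hμA hA]
    calc _ ≤ ∫⁻ z in A ∩ T ×ˢ T, (ENNReal.ofReal (f z.1 * f z.2) + a z) := by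
          refine lintegral_mono fun z => ?_
          rw [← ENNReal.ofReal_toReal (a := a z) ENNReal.ofReal_ne_top]
          refine (ENNReal.ofReal_le_ofReal ?_).trans ENNReal.ofReal_add_le
          rw [ENNReal.toReal_ofReal (abs_nonneg _)]
          have := le_abs_self (fp z - f z.1 * f z.2)
          linarith
      _ = _ := lintegral_add_left hff _
      _ ≤ _ := by gcongr; exact hHA hA
  have le2 : μ.prod μ ≤ J + H := by
    refine Measure.le_iff.2 fun A hA => ?_
    rw [Measure.add_apply, hJA hA, hμA hA]
    calc _ ≤ ∫⁻ z in A ∩ T ×ˢ T, (ENNReal.ofReal (fp z) + a z) := by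
          refine lintegral_mono fun z => ?_
          rw [← ENNReal.ofReal_toReal (a := a z) ENNReal.ofReal_ne_top]
          refine (ENNReal.ofReal_le_ofReal ?_).trans ENNReal.ofReal_add_le
          rw [ENNReal.toReal_ofReal (abs_nonneg _)]
          have := neg_abs_le (fp z - f z.1 * f z.2)
          linarith
      _ = _ := by
          refine lintegral_add_right' _ ?_
          refine ham.mono_measure ?_
          rw [hvv]; exact Measure.restrict_mono (Set.inter_subset_right.trans hTS) le_rfl
      _ ≤ _ := by gcongr; exact hHA hA
  -- pass to integrals
  have hKm : Measurable fun z : (Fin d → ℝ) × (Fin d → ℝ) => κ z.1 * κ z.2 := by fun_prop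
  have hHi : ∫⁻ z, κ z.1 * κ z.2 ∂H ≤ ENNReal.ofReal (C * M ^ (2 / p)) := by
    rw [hHd, lintegral_withDensity_eq_lintegral_mul₀ ham hKm.aemeasurable]
    refine hH.trans ?_
    rw [ENNReal.ofReal_mul hC0, ENNReal.ofReal_rpow_of_nonneg hM0 (by positivity)]
  have bY : ∀ ω, |k (Y ω)| ≤ M := fun ω => by rw [abs_of_nonneg (hk0 _ (hYv ω))]; exact hM _ (hYv ω)
  have bZ : ∀ ω, |k (Z ω)| ≤ M := fun ω => by rw [abs_of_nonneg (hk0 _ (hZv ω))]; exact hM _ (hZv ω)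
  have iY : Integrable (fun ω => k (Y ω)) P :=
    Integrable.of_bound (hk.comp hY).aestronglyMeasurable M (ae_of_all _ bY)
  have iZ : Integrable (fun ω => k (Z ω)) P :=
    Integrable.of_bound (hk.comp hZ).aestronglyMeasurable M (ae_of_all _ bZ)
  have iYZ : Integrable (fun ω => k (Y ω) * k (Z ω)) P :=
    iZ.bdd_mul (hk.comp hY).aestronglyMeasurable (ae_of_all _ bY)
  have nY : 0 ≤ ∫ ω, k (Y ω) ∂P := integral_nonneg fun ω => hk0 _ (hYv ω)
  have nZ : 0 ≤ ∫ ω, k (Z ω) ∂P := integral_nonneg fun ω => hk0 _ (hZv ω)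
  have nYZ : 0 ≤ ∫ ω, k (Y ω) * k (Z ω) ∂P := integral_nonneg fun ω => mul_nonneg (hk0 _ (hYv ω)) (hk0 _ (hZv ω))
  have eJ : ∫⁻ z, κ z.1 * κ z.2 ∂J = ENNReal.ofReal (∫ ω, k (Y ω) * k (Z ω) ∂P) := by
    rw [hJd, lintegral_map hKm hYZ, ofReal_integral_eq_lintegral_ofReal iYZ
      (ae_of_all _ fun ω => mul_nonneg (hk0 _ (hYv ω)) (hk0 _ (hZv ω)))]
    refine lintegral_congr fun ω => ?_
    rw [ENNReal.ofReal_mul (hk0 _ (hYv ω))]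
  have eμ : ∫⁻ z, κ z.1 * κ z.2 ∂(μ.prod μ) = ENNReal.ofReal ((∫ ω, k (Y ω) ∂P) * ∫ ω, k (Z ω) ∂P) := by
    rw [lintegral_prod_mul hκm.aemeasurable hκm.aemeasurable, ENNReal.ofReal_mul nY]
    congr 1
    · rw [hμ, lintegral_map hκm hY, ofReal_integral_eq_lintegral_ofReal iY (ae_of_all _ fun ω => hk0 _ (hYv ω))]
    · rw [hYl, ← hZl, lintegral_map hκm hZ,
        ofReal_integral_eq_lintegral_ofReal iZ (ae_of_all _ fun ω => hk0 _ (hZv ω))]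
  have nC : 0 ≤ C * M ^ (2 / p) := by positivity
  have f1 : ∫⁻ z, κ z.1 * κ z.2 ∂J ≤ ∫⁻ z, κ z.1 * κ z.2 ∂(μ.prod μ) + ∫⁻ z, κ z.1 * κ z.2 ∂H := by
    rw [← lintegral_add_measure]; exact lintegral_mono' le1 le_rfl
  have f2 : ∫⁻ z, κ z.1 * κ z.2 ∂(μ.prod μ) ≤ ∫⁻ z, κ z.1 * κ z.2 ∂J + ∫⁻ z, κ z.1 * κ z.2 ∂H := by
    rw [← lintegral_add_measure]; exact lintegral_mono' le2 le_rfl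
  have g1 := f1.trans (add_le_add_right hHi _)
  have g2 := f2.trans (add_le_add_right hHi _)
  rw [eJ, eμ, ← ENNReal.ofReal_add (by positivity) nC, ENNReal.ofReal_le_ofReal_iff (by positivity)] at g1
  rw [eJ, eμ, ← ENNReal.ofReal_add (by positivity) nC, ENNReal.ofReal_le_ofReal_iff (by positivity)] at g2
  rw [abs_le]; constructor <;> linarith

end BB

namespace BB

structure Setup {Ω : Type*} [MeasurableSpace Ω] (P : Measure Ω) {d : ℕ} (X : ℕ → Ω → (Fin d → ℝ))
    (f : (Fin d → ℝ) → ℝ) : Prop where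
  hmeas : ∀ i, Measurable (X i)
  hval : ∀ i ω, X i ω ∈ Sd d
  hlaw : ∀ i : ℕ, 1 ≤ i → Measure.map (X i) P = volume.withDensity fun x => ENNReal.ofReal (f x)
  hsupp : ∀ x, x ∉ Sd d → f x = 0
  hA4 : ∃ L : NNReal, LipschitzOnWith L f (Sd d)

variable {Ω : Type*} [MeasurableSpace Ω] {P : Measure Ω} {d : ℕ} {X : ℕ → Ω → (Fin d → ℝ)}
    {f : (Fin d → ℝ) → ℝ} {s : Fin d → ℝ}

lemma Setup.f_meas (H : Setup P X f) : Measurable f := by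
  obtain ⟨L, hL⟩ := H.hA4
  refine measurable_of_restrict_of_restrict_compl (measurableSet_Sd d) ?_ ?_
  · exact (continuousOn_iff_continuous_domRestrict.1 hL.continuousOn).measurable
  · have : (Sd d)ᶜ.domRestrict f = fun _ => 0 := by
      ext x; exact H.hsupp x x.2
    rw [this]; exact measurable_const

lemma Setup.f_bdd (H : Setup P X f) : ∃ M, 0 ≤ M ∧ ∀ x ∈ Sd d, |max (f x) 0| ≤ M := by
  obtain ⟨L, hL⟩ := H.hA4
  obtain ⟨M, hM⟩ := (isCompact_Sd d).exists_bound_of_continuousOn hL.continuousOn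
  refine ⟨max M 0, le_max_right _ _, fun x hx => ?_⟩
  rw [abs_of_nonneg (le_max_right _ _)]
  exact max_le_max ((le_abs_self _).trans (hM x hx)) le_rfl

lemma Setup.f_lip (H : Setup P X f) (hs : s ∈ SdInt d) : ∃ L : ℝ, 0 ≤ L ∧
    ∀ x ∈ Sd d, |max (f x) 0 - max (f s) 0| ≤ L * ∑ i, |x i - s i| := by
  obtain ⟨L, hL⟩ := H.hA4
  refine ⟨L, L.2, fun x hx => ?_⟩
  have h1 := hL.dist_le_mul x hx s (SdInt_subset hs)
  have h2 : dist x s ≤ ∑ i, |x i - s i| := by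
    refine (dist_pi_le_iff (Finset.sum_nonneg fun _ _ => abs_nonneg _)).2 fun i => ?_
    rw [Real.dist_eq]
    exact Finset.single_le_sum (f := fun i => |x i - s i|) (fun _ _ => abs_nonneg _) (Finset.mem_univ i)
  calc _ ≤ |f x - f s| := by
        have := abs_max_sub_max_le_max (f x) 0 (f s) 0
        simpa using this
    _ ≤ L * dist x s := h1
    _ ≤ _ := by gcongr

lemma Setup.expect (H : Setup P X f) {i : ℕ} (hi : 1 ≤ i) {g : (Fin d → ℝ) → ℝ} (hg : Measurable g) :
    ∫ ω, g (X i ω) ∂P = ∫ x in Sd d, g x * max (f x) 0 := by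
  rw [← integral_map (H.hmeas i).aemeasurable hg.aestronglyMeasurable (f := g), H.hlaw i hi,
    integral_withDensity_eq_integral_toReal_smul H.f_meas.ennreal_ofReal
      (ae_of_all _ fun _ => ENNReal.ofReal_lt_top),
    setIntegral_eq_integral_of_forall_compl_eq_zero]
  · refine integral_congr_ae (ae_of_all _ fun x => ?_)
    simp only [smul_eq_mul, ENNReal.toReal_ofReal']
    ring
  · intro x hx; rw [H.hsupp x hx]; simp

lemma Setup.mean_lim (H : Setup P X f) (hs : s ∈ SdInt d) {i : ℕ} (hi : 1 ≤ i) :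
    Tendsto (fun b => ∫ ω, kappa d s b (X i ω) ∂P) (𝓝[>] 0) (𝓝 (max (f s) 0)) := by
  obtain ⟨L, hL0, hL⟩ := H.f_lip hs
  obtain ⟨M, hM0, hM⟩ := H.f_bdd
  simp only [H.expect hi (kappa_meas s _)]
  exact approx_id hs (g := fun x => max (f x) 0) (H.f_meas.max measurable_const) hL0 hM hL

lemma Setup.sq_lim (H : Setup P X f) (hs : s ∈ SdInt d) {i : ℕ} (hi : 1 ≤ i) :
    Tendsto (fun b => b ^ ((d:ℝ)/2) * ∫ ω, kappa d s b (X i ω) ^ 2 ∂P) (𝓝[>] 0) (𝓝 (psiFun d s * max (f s) 0)) := by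
  obtain ⟨L, hL0, hL⟩ := H.f_lip hs
  obtain ⟨M, hM0, hM⟩ := H.f_bdd
  simp only [H.expect hi (g := fun x => kappa d s _ x ^ 2) ((kappa_meas s _).pow_const 2)]
  exact approx_sq hs (g := fun x => max (f x) 0) (H.f_meas.max measurable_const) hL0 hM hL

lemma bpow_lim {c : ℝ} (hc : 0 < c) : Tendsto (fun b : ℝ => b ^ c) (𝓝[>] 0) (𝓝 0) := by
  have : ContinuousAt (fun b : ℝ => b ^ c) 0 := Real.continuousAt_rpow_const _ _ (Or.inr hc.le)
  have h := this.tendsto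
  simp only [Real.zero_rpow hc.ne'] at h
  exact h.mono_left nhdsWithin_le_nhds

lemma Setup.var_lim (H : Setup P X f) (hd : 1 ≤ d) (hs : s ∈ SdInt d) {i : ℕ} (hi : 1 ≤ i) :
    Tendsto (fun b => b ^ ((d:ℝ)/2) * (∫ ω, kappa d s b (X i ω) ^ 2 ∂P - (∫ ω, kappa d s b (X i ω) ∂P) ^ 2))
      (𝓝[>] 0) (𝓝 (psiFun d s * max (f s) 0)) := by
  have hd' : (0:ℝ) < (d:ℝ) / 2 := by
    have : (0:ℝ) < d := by exact_mod_cast hd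
    positivity
  have h := (H.sq_lim hs hi).sub ((bpow_lim hd').mul ((H.mean_lim hs hi).pow 2))
  simp only [zero_mul, sub_zero] at h
  refine h.congr fun b => ?_
  ring

end BB

namespace BB

variable {Ω : Type*} [MeasurableSpace Ω] {P : Measure Ω} {d : ℕ} {X : ℕ → Ω → (Fin d → ℝ)}
    {f : (Fin d → ℝ) → ℝ} {s : Fin d → ℝ}

lemma kappa_lint (hs : s ∈ SdInt d) {b : ℝ} (hb : 0 < b) :
    ∫⁻ x in Sd d, ENNReal.ofReal (kappa d s b x) ≤ 1 := (lintegral_dirK (u_gt hs hb) (v_gt hs hb)).le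

lemma theta_exists {p ν : ℝ} (hp : 2 < p) (hν : 2 * (p - 1) / (p - 2) < ν) :
    ∃ θ : ℝ, 0 < θ ∧ θ < 1 ∧ 1 < ν * θ ∧ 2 / p * (1 - θ) + 2 * θ < 1 := by
  have h1 : 0 < 2 * (p - 1) / (p - 2) := div_pos (by linarith) (by linarith)
  have hν0 : 0 < ν := h1.trans hν
  have h2 : 1 / ν < (p - 2) / (2 * (p - 1)) := by
    rw [div_lt_iff₀ (by linarith)] at hν
    rw [div_lt_div_iff₀ hν0 (by linarith)]; linarith
  obtain ⟨θ, ht1, ht2⟩ := exists_between h2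
  have ht0 : 0 < θ := lt_trans (by positivity) ht1
  rw [div_lt_iff₀ hν0] at ht1
  rw [lt_div_iff₀ (by linarith)] at ht2
  refine ⟨θ, ht0, by nlinarith, by linarith, ?_⟩
  have hp0 : 0 < p := by linarith
  rw [div_mul_eq_mul_div, ← lt_sub_iff_add_lt, div_lt_iff₀ hp0]
  nlinarith

lemma interp {c x y θ : ℝ} (hc : 0 ≤ c) (hx : c ≤ x) (hy : c ≤ y) (h0 : 0 < θ) (h1 : θ < 1) :
    c ≤ x ^ (1 - θ) * y ^ θ := by
  have hx0 : 0 ≤ x := hc.trans hx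
  calc c = c ^ (1 - θ) * c ^ θ := by
        rw [← Real.rpow_add_of_nonneg hc (by linarith) h0.le]; simp
    _ ≤ _ := by gcongr

lemma Setup.cov_bound [IsProbabilityMeasure P] (H : Setup P X f) (hd : 1 ≤ d) (hs : s ∈ SdInt d)
    {p ν : ℝ} (hp : 2 < p) (hA2 : AssumpA2 P X f p) (hν : 2 * (p - 1) / (p - 2) < ν)
    (hA3 : (fun m : ℕ => alphaMix P X m) =O[atTop] fun m : ℕ => (m : ℝ) ^ (-ν)) :
    ∃ η δ C : ℝ, 1 < η ∧ 0 < δ ∧ 0 < C ∧ ∀ᶠ b in 𝓝[>] (0:ℝ), ∀ i m : ℕ, 1 ≤ i → 1 ≤ m →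
      |∫ ω, kappa d s b (X i ω) * kappa d s b (X (i + m) ω) ∂P -
        (∫ ω, kappa d s b (X i ω) ∂P) * ∫ ω, kappa d s b (X (i + m) ω) ∂P| ≤
        C * b ^ (δ - (d:ℝ) / 2) * (m:ℝ) ^ (-η) := by
  obtain ⟨θ, ht0, ht1, htν, htp⟩ := theta_exists hp hν
  have hν0 : 0 < ν := lt_trans (div_pos (by linarith) (by linarith)) hν
  obtain ⟨Ca, hCa, hα⟩ := alpha_pow P X hν0 hA3
  obtain ⟨fp, hJ, hi, C2, hC2⟩ := hA2
  obtain ⟨Ck, hCk, hk⟩ := kappa_sup hs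
  have hd0 : (0:ℝ) < d := by exact_mod_cast hd
  set K1 : ℝ := (max C2 0 + 1) * Ck ^ (2 / p) with hK1
  set K2 : ℝ := 4 * Ck ^ 2 * Ca with hK2
  have hK1p : 0 < K1 := by positivity
  have hK2p : 0 < K2 := by positivity
  refine ⟨ν * θ, (d:ℝ) / 2 * (1 - (2 / p * (1 - θ) + 2 * θ)), K1 ^ (1 - θ) * K2 ^ θ, htν,
    mul_pos (by positivity) (by linarith), by positivity, ?_⟩
  filter_upwards [hk, self_mem_nhdsWithin] with b hkb hb i m hi1 hm1
  have hb : 0 < b := hb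
  set M := Ck * b ^ (-(d:ℝ) / 2) with hM
  have hMp : 0 < M := by positivity
  have him : 1 ≤ i + m := by omega
  have hne : i ≠ i + m := by omega
  have hm0 : (0:ℝ) < m := by exact_mod_cast hm1
  have b1 := cov_A2 P (H.hmeas i) (H.hmeas (i + m)) (H.hval i) (H.hval (i + m)) H.f_meas (H.hlaw i hi1)
    (H.hlaw _ him) (hJ i (i + m) hi1 him hne) (p := p) (C := max C2 0 + 1) (by linarith)
    (hi i (i + m) hi1 him hne) (by positivity)
    ((hC2 i (i + m) hi1 him hne).trans ((le_max_left _ _).trans (by linarith)))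
    (kappa_meas s b) (fun x hx => kappa_nn hs hb hx) hMp.le hkb (kappa_lint hs hb)
  have b2 : |∫ ω, kappa d s b (X i ω) * kappa d s b (X (i + m) ω) ∂P -
        (∫ ω, kappa d s b (X i ω) ∂P) * ∫ ω, kappa d s b (X (i + m) ω) ∂P| ≤
        M ^ 2 * (4 * alphaMix P X m) := by
    have bd : ∀ j ω, |kappa d s b (X j ω) / M| ≤ 1 := fun j ω => by
      rw [abs_of_nonneg (div_nonneg (kappa_nn hs hb (H.hval j ω)) hMp.le), div_le_one hMp]
      exact hkb _ (H.hval j ω)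
    have := cov_ineq (past_le H.hmeas i) (fut_le H.hmeas (i + m)) P (alpha_bd P X hi1 m)
      (Y := fun ω => kappa d s b (X i ω) / M) (Z := fun ω => kappa d s b (X (i + m) ω) / M)
      (((kappa_meas s b).comp (past_meas X hi1 le_rfl)).div_const _).stronglyMeasurable (bd i)
      (((kappa_meas s b).comp (fut_meas X le_rfl)).div_const _).stronglyMeasurable (bd (i + m))
    simp only [div_mul_div_comm, integral_div] at this
    rw [← sub_div, abs_div, div_le_iff₀ (by positivity), abs_of_pos (a := M * M) (by positivity)] at this
    linarith
  have b1' : (max C2 0 + 1) * M ^ (2 / p) = K1 * b ^ (-(d:ℝ) / 2 * (2 / p)) := by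
    rw [hM, Real.mul_rpow hCk.le (by positivity), ← Real.rpow_mul hb.le]; ring
  have b2' : M ^ 2 * (4 * alphaMix P X m) ≤ K2 * (b ^ (-(d:ℝ) / 2 * 2) * (m:ℝ) ^ (-ν)) := by
    have h1 : M ^ 2 = Ck ^ 2 * b ^ (-(d:ℝ) / 2 * 2) := by
      rw [hM, mul_pow, Real.rpow_mul hb.le]; norm_num
    rw [h1]
    calc _ ≤ Ck ^ 2 * b ^ (-(d:ℝ) / 2 * 2) * (4 * (Ca * (m:ℝ) ^ (-ν))) := by
          gcongr; exact hα m hm1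
      _ = _ := by ring
  rw [b1'] at b1
  clear_value K1 K2
  refine (interp (abs_nonneg _) b1 (b2.trans b2') ht0 ht1).trans (le_of_eq ?_)
  rw [Real.mul_rpow hK1p.le (by positivity), Real.mul_rpow hK2p.le (by positivity),
    Real.mul_rpow (by positivity) (by positivity), ← Real.rpow_mul hb.le, ← Real.rpow_mul hb.le,
    ← Real.rpow_mul hm0.le]
  have : b ^ ((d:ℝ) / 2 * (1 - (2 / p * (1 - θ) + 2 * θ)) - d / 2) =
      b ^ (-(d:ℝ) / 2 * (2 / p) * (1 - θ)) * b ^ (-(d:ℝ) / 2 * 2 * θ) := by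
    rw [← Real.rpow_add hb]; congr 1; ring
  rw [this, neg_mul]; ring

lemma sum_dist_le {g : ℕ → ℝ} (hg : ∀ m, 0 ≤ g m) (hgs : Summable g) (n i : ℕ) :
    ∑ j ∈ (Finset.range n).erase i, g (max i j - min i j) ≤ 2 * ∑' m, g m := by
  have h1 : ∑ j ∈ ((Finset.range n).erase i).filter (fun j => j < i), g (max i j - min i j) ≤ ∑' m, g m := by
    calc _ = ∑ j ∈ ((Finset.range n).erase i).filter (fun j => j < i), g (i - j) := by
          refine Finset.sum_congr rfl fun j hj => ?_
          have := (Finset.mem_filter.1 hj).2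
          congr 1; omega
      _ = ∑ m ∈ (((Finset.range n).erase i).filter (fun j => j < i)).image (fun j => i - j), g m := by
          rw [Finset.sum_image]
          intro a ha b hb hab
          have h1 := (Finset.mem_filter.1 ha).2
          have h2 := (Finset.mem_filter.1 hb).2
          simp only at hab
          omega
      _ ≤ _ := hgs.sum_le_tsum _ fun _ _ => hg _
  have h2 : ∑ j ∈ ((Finset.range n).erase i).filter (fun j => ¬ j < i), g (max i j - min i j) ≤ ∑' m, g m := by
    calc _ = ∑ j ∈ ((Finset.range n).erase i).filter (fun j => ¬ j < i), g (j - i) := by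
          refine Finset.sum_congr rfl fun j hj => ?_
          have := (Finset.mem_filter.1 hj).2
          congr 1; omega
      _ = ∑ m ∈ (((Finset.range n).erase i).filter (fun j => ¬ j < i)).image (fun j => j - i), g m := by
          rw [Finset.sum_image]
          intro a ha b hb hab
          have h1 := (Finset.mem_filter.1 ha).2
          have h2 := (Finset.mem_filter.1 hb).2
          simp only at hab
          omega
      _ ≤ _ := hgs.sum_le_tsum _ fun _ _ => hg _
  rw [← Finset.sum_filter_add_sum_filter_not ((Finset.range n).erase i) (fun j => j < i)]
  linarith

lemma var_block {xi : ℕ → Ω → ℝ} (hint : ∀ i j, Integrable (fun ω => xi i ω * xi j ω) P)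
    {V : ℝ} (hV : ∀ i, ∫ ω, xi i ω ^ 2 ∂P = V) {g : ℕ → ℝ} (hg : ∀ m, 0 ≤ g m) (hgs : Summable g)
    (hc : ∀ i m, 1 ≤ m → |∫ ω, xi i ω * xi (i + m) ω ∂P| ≤ g m) (n : ℕ) :
    |∫ ω, (∑ i ∈ Finset.range n, xi i ω) ^ 2 ∂P - n * V| ≤ n * (2 * ∑' m, g m) := by
  have e1 : ∫ ω, (∑ i ∈ Finset.range n, xi i ω) ^ 2 ∂P =
      ∑ i ∈ Finset.range n, ∑ j ∈ Finset.range n, ∫ ω, xi i ω * xi j ω ∂P := by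
    simp_rw [sq, Finset.sum_mul_sum]
    rw [integral_finsetSum _ fun i _ => integrable_finsetSum _ fun j _ => hint i j]
    refine Finset.sum_congr rfl fun i _ => ?_
    rw [integral_finsetSum _ fun j _ => hint i j]
  have e2 : ∑ i ∈ Finset.range n, ∑ j ∈ Finset.range n, ∫ ω, xi i ω * xi j ω ∂P - n * V =
      ∑ i ∈ Finset.range n, ∑ j ∈ (Finset.range n).erase i, ∫ ω, xi i ω * xi j ω ∂P := by
    have : (n:ℝ) * V = ∑ i ∈ Finset.range n, V := by simp
    rw [this, ← Finset.sum_sub_distrib]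
    refine Finset.sum_congr rfl fun i hi => ?_
    rw [← Finset.add_sum_erase _ _ hi, ← hV i]
    simp [sq]
  have hc' : ∀ i j, j ≠ i → |∫ ω, xi i ω * xi j ω ∂P| ≤ g (max i j - min i j) := by
    intro i j hij
    rcases lt_or_gt_of_ne hij with h | h
    · have := hc j (i - j) (by omega)
      rw [show j + (i - j) = i by omega] at this
      rw [show max i j - min i j = i - j by omega]
      simpa only [mul_comm] using this
    · have := hc i (j - i) (by omega)
      rw [show i + (j - i) = j by omega] at this
      rw [show max i j - min i j = j - i by omega]
      exact this
  rw [e1, e2]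
  calc _ ≤ ∑ i ∈ Finset.range n, (2 * ∑' m, g m) := by
        refine (Finset.abs_sum_le_sum_abs _ _).trans (Finset.sum_le_sum fun i _ => ?_)
        refine (Finset.abs_sum_le_sum_abs _ _).trans (le_trans (Finset.sum_le_sum fun j hj => ?_) (sum_dist_le hg hgs n i))
        exact hc' i j (Finset.ne_of_mem_erase hj)
    _ = _ := by simp

end BB

namespace BB

variable {Ω : Type*} [MeasurableSpace Ω] {P : Measure Ω} {d : ℕ} {X : ℕ → Ω → (Fin d → ℝ)}
    {f : (Fin d → ℝ) → ℝ} {s : Fin d → ℝ}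

lemma Setup.Xi_meas (H : Setup P X f) (b : ℝ) (i : ℕ) : Measurable (Xi P X s b i) :=
  ((kappa_meas s b).comp (H.hmeas i)).sub_const _

lemma Setup.Xi_bdd [IsProbabilityMeasure P] (H : Setup P X f) (hs : s ∈ SdInt d) :
    ∃ C : ℝ, 0 < C ∧ ∀ᶠ b in 𝓝[>] (0:ℝ), ∀ i ω,
    |Xi P X s b i ω| ≤ C * b ^ (-(d:ℝ) / 2) ∧ |kappa d s b (X i ω)| ≤ C * b ^ (-(d:ℝ) / 2) := by
  obtain ⟨C, hC, h⟩ := kappa_sup hs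
  refine ⟨C, hC, ?_⟩
  filter_upwards [h, self_mem_nhdsWithin] with b hkb hb i ω
  have hb : 0 < b := hb
  set M := C * b ^ (-(d:ℝ) / 2) with hM
  have h1 : 0 ≤ ∫ ω', kappa d s b (X i ω') ∂P := integral_nonneg fun ω => kappa_nn hs hb (H.hval i ω)
  have h2 : ∫ ω', kappa d s b (X i ω') ∂P ≤ M := by
    have := norm_integral_le_of_norm_le_const (μ := P) (f := fun ω' => kappa d s b (X i ω')) (C := M)
      (ae_of_all _ fun ω => by
        rw [Real.norm_eq_abs, abs_of_nonneg (kappa_nn hs hb (H.hval i ω))]; exact hkb _ (H.hval i ω))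
    simp only [probReal_univ, mul_one] at this
    exact (le_abs_self _).trans this
  have h3 := kappa_nn hs hb (H.hval i ω)
  have h4 := hkb _ (H.hval i ω)
  refine ⟨?_, ?_⟩
  · unfold Xi; rw [abs_le]; constructor <;> linarith
  · rw [abs_of_nonneg h3]; exact h4

lemma Setup.block_var [IsProbabilityMeasure P] (H : Setup P X f) (hd : 1 ≤ d) (hs : s ∈ SdInt d)
    {p ν : ℝ} (hp : 2 < p) (hA2 : AssumpA2 P X f p) (hν : 2 * (p - 1) / (p - 2) < ν)
    (hA3 : (fun m : ℕ => alphaMix P X m) =O[atTop] fun m : ℕ => (m : ℝ) ^ (-ν)) :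
    ∃ r : ℝ → ℝ, Tendsto r (𝓝[>] 0) (𝓝 0) ∧ ∀ᶠ b in 𝓝[>] (0:ℝ), ∀ n : ℕ,
      |b ^ ((d:ℝ) / 2) * ∫ ω, (∑ i ∈ Finset.range n, Xi P X s b (i + 1) ω) ^ 2 ∂P -
        n * (psiFun d s * max (f s) 0)| ≤ n * r b := by
  obtain ⟨η, δ, C, hη, hδ, hC, hcov⟩ := H.cov_bound hd hs hp hA2 hν hA3
  obtain ⟨Ck, hCk, hbd⟩ := H.Xi_bdd hs
  set v := psiFun d s * max (f s) 0 with hv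
  set W : ℝ → ℝ := fun b => b ^ ((d:ℝ)/2) * (∫ ω, kappa d s b (X 1 ω) ^ 2 ∂P - (∫ ω, kappa d s b (X 1 ω) ∂P) ^ 2)
    with hW
  have hWl : Tendsto W (𝓝[>] 0) (𝓝 v) := H.var_lim hd hs le_rfl
  set Z : ℝ := ∑' m : ℕ, (m:ℝ) ^ (-η) with hZ
  have hsum : Summable fun m : ℕ => (m:ℝ) ^ (-η) := by
    rw [Real.summable_nat_rpow]; linarith
  refine ⟨fun b => |W b - v| + 2 * C * Z * b ^ δ, ?_, ?_⟩
  · have h1 : Tendsto (fun b => |W b - v|) (𝓝[>] 0) (𝓝 0) := by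
      have := (hWl.sub_const v).abs
      simpa using this
    have h2 := (bpow_lim hδ).const_mul (2 * C * Z)
    simpa using h1.add h2
  filter_upwards [hcov, hbd, self_mem_nhdsWithin] with b hcovb hbdb hb n
  have hb : 0 < b := hb
  set M := Ck * b ^ (-(d:ℝ) / 2) with hM
  have iK : ∀ i, Integrable (fun ω => kappa d s b (X i ω)) P := fun i =>
    Integrable.of_bound ((kappa_meas s b).comp (H.hmeas i)).aestronglyMeasurable M (ae_of_all _ fun ω => (hbdb i ω).2)
  have iKK : ∀ i j, Integrable (fun ω => kappa d s b (X i ω) * kappa d s b (X j ω)) P := fun i j =>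
    (iK j).bdd_mul ((kappa_meas s b).comp (H.hmeas i)).aestronglyMeasurable (ae_of_all _ fun ω => (hbdb i ω).2)
  have iX : ∀ i, Integrable (Xi P X s b i) P := fun i => (iK i).sub (integrable_const _)
  have iXX : ∀ i j, Integrable (fun ω => Xi P X s b i ω * Xi P X s b j ω) P := fun i j =>
    (iX j).bdd_mul (H.Xi_meas b i).aestronglyMeasurable (ae_of_all _ fun ω => (hbdb i ω).1)
  have ec : ∀ i j, ∫ ω, Xi P X s b i ω * Xi P X s b j ω ∂P =
      ∫ ω, kappa d s b (X i ω) * kappa d s b (X j ω) ∂P -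
        (∫ ω, kappa d s b (X i ω) ∂P) * ∫ ω, kappa d s b (X j ω) ∂P := by
    intro i j
    unfold Xi
    set A := ∫ ω, kappa d s b (X i ω) ∂P
    set B := ∫ ω, kappa d s b (X j ω) ∂P
    have : ∀ ω, (kappa d s b (X i ω) - A) * (kappa d s b (X j ω) - B) =
      kappa d s b (X i ω) * kappa d s b (X j ω) - (A * kappa d s b (X j ω) + (B * kappa d s b (X i ω) - A * B)) := by
      intro ω; ring
    simp only [this]
    have j1 : Integrable (fun ω => B * kappa d s b (X i ω) - A * B) P :=
      ((iK i).const_mul _).sub (integrable_const _)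
    have j2 : Integrable (fun ω => A * kappa d s b (X j ω) + (B * kappa d s b (X i ω) - A * B)) P :=
      ((iK j).const_mul _).add j1
    rw [integral_sub (iKK i j) j2, integral_add ((iK j).const_mul _) j1,
      integral_sub ((iK i).const_mul _) (integrable_const _), integral_const_mul, integral_const_mul]
    simp only [integral_const, probReal_univ, one_smul]
    show _ - (A * B + (B * A - A * B)) = _
    ring
  have hV : ∀ i : ℕ, ∫ ω, Xi P X s b (i + 1) ω ^ 2 ∂P =
      ∫ ω, kappa d s b (X 1 ω) ^ 2 ∂P - (∫ ω, kappa d s b (X 1 ω) ∂P) ^ 2 := by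
    intro i
    simp only [sq]
    rw [ec]
    have h1 : ∫ ω, kappa d s b (X (i+1) ω) ∂P = ∫ ω, kappa d s b (X 1 ω) ∂P := by
      rw [H.expect (by omega) (kappa_meas s b), H.expect le_rfl (kappa_meas s b)]
    have h2 : ∫ ω, kappa d s b (X (i+1) ω) * kappa d s b (X (i+1) ω) ∂P =
        ∫ ω, kappa d s b (X 1 ω) * kappa d s b (X 1 ω) ∂P := by
      have hm : Measurable fun x => kappa d s b x * kappa d s b x := (kappa_meas s b).mul (kappa_meas s b)
      rw [H.expect (by omega) hm, H.expect le_rfl hm]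
    rw [h1, h2]
  have key := var_block (P := P) (xi := fun i => Xi P X s b (i + 1)) (fun i j => iXX _ _) hV
    (g := fun m : ℕ => C * b ^ (δ - (d:ℝ) / 2) * (m:ℝ) ^ (-η)) (fun m => by positivity)
    (hsum.mul_left _) (fun i m hm => by
      simp only [ec]
      have := hcovb (i + 1) m (by omega) hm
      rw [show i + m + 1 = i + 1 + m by ring]
      exact this) n
  rw [tsum_mul_left] at key
  set Q := ∫ ω, (∑ i ∈ Finset.range n, Xi P X s b (i + 1) ω) ^ 2 ∂P with hQ
  have hbp : 0 < b ^ ((d:ℝ)/2) := by positivity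
  have k2 : |b ^ ((d:ℝ)/2) * Q - n * W b| ≤ n * (2 * C * Z * b ^ δ) := by
    have e1 : b ^ ((d:ℝ)/2) * Q - n * W b = b ^ ((d:ℝ)/2) * (Q - n *
      (∫ ω, kappa d s b (X 1 ω) ^ 2 ∂P - (∫ ω, kappa d s b (X 1 ω) ∂P) ^ 2)) := by
      simp only [hW]; ring
    rw [e1, abs_mul, abs_of_pos hbp]
    calc _ ≤ b ^ ((d:ℝ)/2) * (n * (2 * (C * b ^ (δ - (d:ℝ) / 2) * Z))) := by gcongr
      _ = n * (2 * C * Z * (b ^ ((d:ℝ)/2) * b ^ (δ - (d:ℝ) / 2))) := by ring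
      _ = _ := by rw [← Real.rpow_add hb]; congr 3; ring
  calc _ ≤ |b ^ ((d:ℝ)/2) * Q - n * W b| + |n * W b - n * v| := abs_sub_le _ _ _
    _ ≤ n * (2 * C * Z * b ^ δ) + n * |W b - v| := by
        gcongr
        rw [← mul_sub, abs_mul, abs_of_nonneg (Nat.cast_nonneg n)]
    _ = _ := by ring

end BB

namespace BB

lemma pow_lim {k : ℕ → ℕ} (hk : Tendsto k atTop atTop) {z : ℕ → ℂ} {t : ℂ}
    (h : Tendsto (fun n => (k n : ℂ) * z n) atTop (𝓝 t)) :
    Tendsto (fun n => (1 + z n) ^ k n) atTop (𝓝 (Complex.exp t)) := by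
  have hk' : Tendsto (fun n => ((k n : ℂ))⁻¹) atTop (𝓝 0) := by
    have := (tendsto_inv_atTop_zero (𝕜 := ℝ)).comp (tendsto_natCast_atTop_atTop.comp hk)
    have := (Complex.continuous_ofReal.tendsto 0).comp this
    simpa [Function.comp_def] using this
  have hz : Tendsto z atTop (𝓝 0) := by
    have := h.mul hk'
    rw [mul_zero] at this
    refine this.congr' ?_
    filter_upwards [hk.eventually_ge_atTop 1] with n hn
    have : (k n : ℂ) ≠ 0 := by exact_mod_cast (by omega : k n ≠ 0)
    field_simp
  have h1 : (fun n => (k n : ℂ) * (Complex.log (1 + z n) - z n)) =O[atTop] fun n => ((k n : ℂ) * z n) * z n := by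
    have := (isBigO_refl (fun n => (k n : ℂ)) atTop).mul (Complex.log_sub_self_isBigO.comp_tendsto hz)
    refine this.congr (fun n => rfl) fun n => ?_
    simp only [Function.comp]; ring
  have h2 : Tendsto (fun n => (k n : ℂ) * (Complex.log (1 + z n) - z n)) atTop (𝓝 0) := by
    refine h1.trans_tendsto ?_
    simpa using h.mul hz
  have h3 : Tendsto (fun n => (k n : ℂ) * Complex.log (1 + z n)) atTop (𝓝 t) := by
    have := h2.add h
    rw [zero_add] at this
    refine this.congr fun n => by ring
  refine ((Complex.continuous_exp.tendsto _).comp h3).congr' ?_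
  filter_upwards [hz.eventually_ne (show (0:ℂ) ≠ -1 by simp)] with n hn
  simp only [Function.comp]
  rw [Complex.exp_nat_mul, Complex.exp_log]
  intro h; exact hn (by linear_combination h)

lemma exp_est {x : ℝ} (hx : |x| ≤ 1) :
    ‖Complex.exp (x * Complex.I) - (1 + x * Complex.I - x ^ 2 / 2)‖ ≤ |x| ^ 3 := by
  have hn : ‖(x:ℂ) * Complex.I‖ = |x| := by simp
  have := Complex.exp_bound (x := (x:ℂ) * Complex.I) (by rw [hn]; exact hx) (n := 3) (by norm_num)
  rw [hn] at this
  have e : ∑ m ∈ Finset.range 3, ((x:ℂ) * Complex.I) ^ m / (m.factorial : ℂ) = 1 + x * Complex.I - x ^ 2 / 2 := by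
    simp [Finset.sum_range_succ, mul_pow]; ring
  rw [e] at this
  refine this.trans ?_
  have : (0:ℝ) ≤ |x| ^ 3 := by positivity
  norm_num [Nat.factorial]
  linarith

lemma char_lim {Ω : Type*} [MeasurableSpace Ω] (P : Measure Ω) [IsProbabilityMeasure P]
    {Y : ℕ → Ω → ℝ} (hY : ∀ n, Measurable (Y n)) {ε : ℕ → ℝ} (hε : Tendsto ε atTop (𝓝 0))
    (hb : ∀ᶠ n in atTop, ∀ ω, |Y n ω| ≤ ε n) (h0 : ∀ᶠ n in atTop, ∫ ω, Y n ω ∂P = 0)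
    {k : ℕ → ℕ} (hk : Tendsto k atTop atTop) {v : ℝ}
    (hv : Tendsto (fun n => k n * ∫ ω, Y n ω ^ 2 ∂P) atTop (𝓝 v)) (t : ℝ) :
    Tendsto (fun n => (∫ ω, Complex.exp ((t * Y n ω : ℝ) * Complex.I) ∂P) ^ k n) atTop
      (𝓝 (Complex.exp (-(v * t ^ 2 / 2 : ℝ)))) := by
  set z : ℕ → ℂ := fun n => ∫ ω, Complex.exp ((t * Y n ω : ℝ) * Complex.I) ∂P - 1 with hz
  have : (fun n => (∫ ω, Complex.exp ((t * Y n ω : ℝ) * Complex.I) ∂P) ^ k n) = fun n => (1 + z n) ^ k n := by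
    ext n; simp [hz]
  rw [this]
  refine pow_lim hk ?_
  have hmain : Tendsto (fun n => (k n : ℂ) * (z n + ((t ^ 2 / 2 * ∫ ω, Y n ω ^ 2 ∂P : ℝ) : ℂ))) atTop (𝓝 0) := by
    have hlim : Tendsto (fun n => |t| ^ 3 * ε n * (k n * ∫ ω, Y n ω ^ 2 ∂P)) atTop (𝓝 0) := by
      have := (hε.const_mul (|t| ^ 3)).mul hv
      simpa using this
    refine squeeze_zero_norm' ?_ hlim
    have hsmall : ∀ᶠ n in atTop, |t| * ε n < 1 := by
      have := hε.const_mul |t|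
      rw [mul_zero] at this
      exact this.eventually_lt_const zero_lt_one
    filter_upwards [hb, h0, hsmall] with n hbn h0n hs
    have iY : Integrable (Y n) P := Integrable.of_bound (hY n).aestronglyMeasurable _ (ae_of_all _ hbn)
    have iY2 : Integrable (fun ω => Y n ω ^ 2) P := by
      refine Integrable.of_bound ((hY n).pow_const 2).aestronglyMeasurable (ε n ^ 2) (ae_of_all _ fun ω => ?_)
      rw [norm_pow]; exact pow_le_pow_left₀ (norm_nonneg _) (hbn ω) 2
    have iE : Integrable (fun ω => Complex.exp ((t * Y n ω : ℝ) * Complex.I)) P := by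
      refine Integrable.of_bound (by
        have := hY n
        exact Measurable.aestronglyMeasurable (by fun_prop)) 1 (ae_of_all _ fun ω => ?_)
      rw [Complex.norm_exp_ofReal_mul_I]
    have i1 : Integrable (fun ω => ((t * Y n ω : ℝ) : ℂ) * Complex.I) P := (iY.const_mul t).ofReal.mul_const _
    have i2 : Integrable (fun ω => ((t * Y n ω : ℝ) : ℂ) ^ 2 / 2) P := by
      have : Integrable (fun ω => ((t ^ 2 / 2 * Y n ω ^ 2 : ℝ) : ℂ)) P := (iY2.const_mul (t ^ 2 / 2)).ofReal
      refine this.congr (ae_of_all _ fun ω => ?_)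
      push_cast; ring
    have i3 : Integrable (fun ω => 1 + ((t * Y n ω : ℝ) : ℂ) * Complex.I) P := (integrable_const _).add i1
    have i4 : Integrable (fun ω => 1 + ((t * Y n ω : ℝ) : ℂ) * Complex.I - ((t * Y n ω : ℝ) : ℂ) ^ 2 / 2) P := i3.sub i2
    have e : z n + ((t ^ 2 / 2 * ∫ ω, Y n ω ^ 2 ∂P : ℝ) : ℂ) =
        ∫ ω, (Complex.exp ((t * Y n ω : ℝ) * Complex.I) -
          (1 + ((t * Y n ω : ℝ) : ℂ) * Complex.I - ((t * Y n ω : ℝ) : ℂ) ^ 2 / 2)) ∂P := by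
      rw [integral_sub iE i4, integral_sub i3 i2, integral_add (integrable_const _) i1, integral_mul_const,
        integral_complex_ofReal, integral_const_mul, h0n]
      have e2 : ∫ ω, ((t * Y n ω : ℝ) : ℂ) ^ 2 / 2 ∂P = ((t ^ 2 / 2 * ∫ ω, Y n ω ^ 2 ∂P : ℝ) : ℂ) := by
        rw [← integral_const_mul, ← integral_complex_ofReal]
        refine integral_congr_ae (ae_of_all _ fun ω => ?_)
        push_cast; ring
      rw [e2]
      simp [hz]
      ring
    have bnd : ‖z n + ((t ^ 2 / 2 * ∫ ω, Y n ω ^ 2 ∂P : ℝ) : ℂ)‖ ≤ |t| ^ 3 * ε n * ∫ ω, Y n ω ^ 2 ∂P := by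
      rw [e, ← integral_const_mul]
      refine norm_integral_le_of_norm_le (iY2.const_mul _) (ae_of_all _ fun ω => ?_)
      have hx : |t * Y n ω| ≤ 1 := by
        rw [abs_mul]
        exact (mul_le_mul_of_nonneg_left (hbn ω) (abs_nonneg t)).trans hs.le
      refine (exp_est hx).trans ?_
      rw [abs_mul, mul_pow, ← sq_abs (Y n ω)]
      calc |t| ^ 3 * |Y n ω| ^ 3 = |t| ^ 3 * |Y n ω| * |Y n ω| ^ 2 := by ring
        _ ≤ |t| ^ 3 * ε n * |Y n ω| ^ 2 := by gcongr; exact hbn ω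
    rw [norm_mul, Complex.norm_natCast]
    calc (k n : ℝ) * _ ≤ k n * (|t| ^ 3 * ε n * ∫ ω, Y n ω ^ 2 ∂P) := by gcongr
      _ = _ := by ring
  have h2 : Tendsto (fun n => (((k n * ∫ ω, Y n ω ^ 2 ∂P) * (t ^ 2 / 2) : ℝ) : ℂ)) atTop (𝓝 ((v * (t ^ 2 / 2) : ℝ) : ℂ)) :=
    (Complex.continuous_ofReal.tendsto _).comp (hv.mul_const _)
  have h3 := hmain.sub h2
  rw [zero_sub, ← mul_div_assoc] at h3
  refine h3.congr fun n => ?_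
  push_cast; ring

lemma kp_lim {pn qn : ℕ → ℕ} (hkn : Tendsto (fun n : ℕ => n / (pn n + qn n)) atTop atTop)
    (hb' : Tendsto (fun n : ℕ => (pn n : ℝ) / ((pn n : ℝ) + (qn n : ℝ))) atTop (𝓝 1)) :
    Tendsto (fun n : ℕ => ((n / (pn n + qn n) : ℕ) : ℝ) * pn n / n) atTop (𝓝 1) := by
  have h1 : Tendsto (fun n : ℕ => ((n / (pn n + qn n) : ℕ) : ℝ) * ((pn n : ℝ) + qn n) / n) atTop (𝓝 1) := by
    have hinv : Tendsto (fun n : ℕ => 1 - (((n / (pn n + qn n) : ℕ) : ℝ))⁻¹) atTop (𝓝 1) := by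
      have := (tendsto_inv_atTop_zero (𝕜 := ℝ)).comp (tendsto_natCast_atTop_atTop.comp hkn)
      simpa [Function.comp_def] using this.const_sub 1
    refine tendsto_of_tendsto_of_tendsto_of_le_of_le' hinv tendsto_const_nhds ?_ ?_
    · filter_upwards [hkn.eventually_ge_atTop 1, eventually_ge_atTop 1] with n hn hn1
      set r := pn n + qn n with hr
      have hr' : (pn n : ℝ) + qn n = r := by rw [hr]; push_cast; rfl
      rw [hr']
      have hn0 : (0:ℝ) < n := by exact_mod_cast hn1
      have hk0 : (0:ℝ) < ((n / r : ℕ) : ℝ) := by exact_mod_cast hn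
      have hr0 : 0 < r := Nat.pos_of_ne_zero fun h => by rw [h] at hn; simp at hn
      have e1 : (((n / r : ℕ) : ℝ)) * r ≤ n := by exact_mod_cast Nat.div_mul_le_self n r
      have e2 : (n:ℝ) ≤ ((n / r : ℕ) : ℝ) * r + r := by
        have := Nat.lt_div_mul_add (a := n) hr0
        exact_mod_cast this.le
      rw [le_div_iff₀ hn0, sub_mul, one_mul, inv_mul_eq_div]
      have e3 : (r:ℝ) ≤ n / ((n / r : ℕ) : ℝ) := by rw [le_div_iff₀ hk0]; linarith
      linarith
    · filter_upwards [eventually_ge_atTop 1] with n hn1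
      have hn0 : (0:ℝ) < n := by exact_mod_cast hn1
      rw [div_le_one hn0]
      exact_mod_cast Nat.div_mul_le_self n (pn n + qn n)
  have := h1.mul hb'
  rw [mul_one] at this
  refine this.congr' ?_
  filter_upwards [hkn.eventually_ge_atTop 1] with n hn
  have hr0 : 0 < pn n + qn n := Nat.pos_of_ne_zero fun h => by rw [h] at hn; simp at hn
  have : (0:ℝ) < (pn n : ℝ) + qn n := by exact_mod_cast hr0
  field_simp

end BB

namespace BB

noncomputable def blk {Ω : Type*} [MeasurableSpace Ω] (P : Measure Ω) {d : ℕ} (X : ℕ → Ω → (Fin d → ℝ)) (s : Fin d → ℝ) (b : ℝ)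
    (p o : ℕ) (ω : Ω) : ℝ := ∑ t ∈ Finset.range p, Xi P X s b (t + 1 + o) ω

lemma blk_sm {Ω : Type*} {F : MeasurableSpace Ω} {d : ℕ} (X : ℕ → Ω → (Fin d → ℝ)) (s : Fin d → ℝ) (b u : ℝ)
    (p o : ℕ) (c : ℕ → ℝ) (h : ∀ t < p, Measurable (X (t + 1 + o))) :
    StronglyMeasurable (fun ω => Complex.exp
      ((u * ∑ t ∈ Finset.range p, (kappa d s b (X (t + 1 + o) ω) - c t) : ℝ) * Complex.I)) := by
  have : Measurable fun ω => ∑ t ∈ Finset.range p, (kappa d s b (X (t + 1 + o) ω) - c t) :=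
    Finset.measurable_fun_sum _ fun t ht =>
      ((kappa_meas s b).comp (h t (Finset.mem_range.1 ht))).sub_const _
  exact Measurable.stronglyMeasurable (by fun_prop)

lemma sum_big (g : ℕ → ℝ) (p q K : ℕ) :
    ∑ j ∈ Finset.Icc 1 K, ∑ i ∈ bigBlock p q j, g i =
      ∑ j ∈ Finset.range K, ∑ t ∈ Finset.range p, g (t + 1 + j * (p + q)) := by
  refine Finset.sum_bij' (fun j _ => j - 1) (fun j _ => j + 1) ?_ ?_ ?_ ?_ ?_
  · intro j hj; rw [Finset.mem_Icc] at hj; rw [Finset.mem_range]; omega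
  · intro j hj; rw [Finset.mem_range] at hj; rw [Finset.mem_Icc]; omega
  · intro j hj; rw [Finset.mem_Icc] at hj; omega
  · intro j hj; omega
  · intro j hj
    unfold bigBlock
    refine Finset.sum_bij' (fun i _ => i - ((j - 1) * (p + q) + 1)) (fun t _ => t + 1 + (j - 1) * (p + q)) ?_ ?_ ?_ ?_ ?_
    · intro i hi; rw [Finset.mem_Icc] at hi; rw [Finset.mem_range]; omega
    · intro i hi; rw [Finset.mem_range] at hi; rw [Finset.mem_Icc]; omega
    · intro i hi; rw [Finset.mem_Icc] at hi; omega
    · intro i hi; omega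
    · intro i hi; rw [Finset.mem_Icc] at hi; congr 1; omega

variable {Ω : Type*} [m0 : MeasurableSpace Ω] {P : Measure Ω} {d : ℕ} {X : ℕ → Ω → (Fin d → ℝ)}
    {f : (Fin d → ℝ) → ℝ} {s : Fin d → ℝ}

lemma Setup.mean_eq (H : Setup P X f) (b : ℝ) {i : ℕ} (hi : 1 ≤ i) :
    ∫ ω, kappa d s b (X i ω) ∂P = ∫ ω, kappa d s b (X 1 ω) ∂P := by
  rw [H.expect hi (kappa_meas s b), H.expect le_rfl (kappa_meas s b)]

lemma Setup.blk_eq (H : Setup P X f) (b : ℝ) (p o : ℕ) (ω : Ω) :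
    blk P X s b p o ω = ∑ t ∈ Finset.range p, (kappa d s b (X (t + 1 + o) ω) - ∫ ω, kappa d s b (X 1 ω) ∂P) := by
  unfold blk Xi
  refine Finset.sum_congr rfl fun t _ => ?_
  rw [H.mean_eq b (by omega)]

lemma Setup.blk_meas (H : Setup P X f) (b : ℝ) (p o : ℕ) : Measurable (blk P X s b p o) :=
  Finset.measurable_fun_sum _ fun _ _ => H.Xi_meas b _

lemma Setup.blk_stat (H : Setup P X f) (hstat : IsStrictlyStationary P X) (b u : ℝ) (p o : ℕ) :
    ∫ ω, Complex.exp ((u * blk P X s b p o ω : ℝ) * Complex.I) ∂P =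
      ∫ ω, Complex.exp ((u * blk P X s b p 0 ω : ℝ) * Complex.I) ∂P := by
  set c := ∫ ω, kappa d s b (X 1 ω) ∂P with hc
  let G : (Fin p → Fin d → ℝ) → ℂ := fun x => Complex.exp ((u * ∑ t, (kappa d s b (x t) - c) : ℝ) * Complex.I)
  have hG : Measurable G := by
    have : Measurable fun x : Fin p → Fin d → ℝ => ∑ t, (kappa d s b (x t) - c) :=
      Finset.measurable_fun_sum _ fun t _ => ((kappa_meas s b).comp (measurable_pi_apply t)).sub_const _
    exact (by fun_prop : Measurable fun x : Fin p → Fin d → ℝ =>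
      Complex.exp ((u * ∑ t, (kappa d s b (x t) - c) : ℝ) * Complex.I))
  have key : ∀ o, ∫ ω, Complex.exp ((u * blk P X s b p o ω : ℝ) * Complex.I) ∂P =
      ∫ x, G x ∂(Measure.map (fun ω => fun t : Fin p => X (t.1 + 1 + o) ω) P) := by
    intro o
    rw [integral_map (measurable_pi_lambda _ fun t => H.hmeas _).aemeasurable hG.aestronglyMeasurable]
    refine integral_congr_ae (ae_of_all _ fun ω => ?_)
    simp only [G]
    rw [H.blk_eq, Finset.sum_range]
  rw [key, key, hstat o p, hstat 0 p]

lemma Setup.factor [IsProbabilityMeasure P] (H : Setup P X f) (hstat : IsStrictlyStationary P X) (b u : ℝ)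
    {p : ℕ} (hp : 1 ≤ p) (q K : ℕ) :
    ‖∫ ω, Complex.exp ((u * ∑ j ∈ Finset.range K, blk P X s b p (j * (p + q)) ω : ℝ) * Complex.I) ∂P -
      (∫ ω, Complex.exp ((u * blk P X s b p 0 ω : ℝ) * Complex.I) ∂P) ^ K‖ ≤ K * (16 * alphaMix P X (q + 1)) := by
  set c := ∫ ω, kappa d s b (X 1 ω) ∂P with hc
  have := prod_ineq P (alpha_nonneg P X (q + 1)) (fun j => past X ((j - 1) * (p + q) + p))
    (fun j => fut X (j * (p + q) + 1)) (fun j => past_le H.hmeas _) (fun j => fut_le H.hmeas _)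
    (fun j hj => by
      have := alpha_bd P X (k := (j - 1) * (p + q) + p) (by omega) (q + 1)
      have e : (j - 1) * (p + q) + p + (q + 1) = j * (p + q) + 1 := by
        obtain ⟨j, rfl⟩ := Nat.exists_eq_add_of_le' hj
        simp only [Nat.add_sub_cancel]; ring
      rwa [e] at this)
    (Y := fun j ω => Complex.exp ((u * blk P X s b p (j * (p + q)) ω : ℝ) * Complex.I))
    (fun j ω => by rw [Complex.norm_exp_ofReal_mul_I])
    (fun i j hij => by
      simp only [H.blk_eq]
      refine blk_sm (F := past X ((j - 1) * (p + q) + p)) X s b u p _ _ fun t ht => past_meas X (by omega) ?_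
      have : i * (p + q) ≤ (j - 1) * (p + q) := Nat.mul_le_mul_right _ (by omega)
      omega)
    (fun j => by
      simp only [H.blk_eq]
      exact blk_sm (F := fut X (j * (p + q) + 1)) X s b u p _ _ fun t ht => fut_meas X (by omega))
    K
  have e1 : ∀ ω, Complex.exp ((u * ∑ j ∈ Finset.range K, blk P X s b p (j * (p + q)) ω : ℝ) * Complex.I) =
      ∏ j ∈ Finset.range K, Complex.exp ((u * blk P X s b p (j * (p + q)) ω : ℝ) * Complex.I) := by
    intro ω
    rw [← Complex.exp_sum, ← Finset.sum_mul, Finset.mul_sum, Complex.ofReal_sum]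
  simp only [e1]
  simp only [H.blk_stat hstat b u p] at this
  rw [Finset.prod_const, Finset.card_range] at this
  exact this

lemma Setup.blk_mean [IsProbabilityMeasure P] (H : Setup P X f) {b C : ℝ}
    (hb : ∀ i ω, |kappa d s b (X i ω)| ≤ C) (p : ℕ) : ∫ ω, blk P X s b p 0 ω ∂P = 0 := by
  unfold blk Xi
  have hi : ∀ i, Integrable (fun ω => kappa d s b (X i ω)) P := fun i =>
    Integrable.of_bound ((kappa_meas s b).comp (H.hmeas i)).aestronglyMeasurable C (ae_of_all _ (hb i))
  rw [integral_finsetSum _ fun i _ => by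
    first
      | exact (hi _).sub (integrable_const _)]
  refine Finset.sum_eq_zero fun i _ => ?_
  rw [integral_sub (hi _) (integrable_const _)]
  simp

end BB

/-- CLT for the big-block sum `S_{1,n}`. -/
theorem big_block_sum_clt {Ω : Type*} [MeasurableSpace Ω]
    (P : Measure Ω) [IsProbabilityMeasure P] (d : ℕ) (hd : 1 ≤ d)
    (X : ℕ → Ω → (Fin d → ℝ)) (hmeas : ∀ i, Measurable (X i))
    (hval : ∀ i ω, X i ω ∈ Sd d)
    (hstat : IsStrictlyStationary P X)
    (f : (Fin d → ℝ) → ℝ)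
    (hlaw : ∀ i : ℕ, 1 ≤ i →
      Measure.map (X i) P = volume.withDensity fun x => ENNReal.ofReal (f x))
    (hsupp : ∀ x, x ∉ Sd d → f x = 0)
    -- (A2)
    (p : ℝ) (hp : 2 < p) (hA2 : AssumpA2 P X f p)
    -- (A3) with ν > max{2(p-1)/(p-2), (d+4)/2}
    (ν : ℝ) (hν : 2 * (p - 1) / (p - 2) < ν) (hν' : ((d : ℝ) + 4) / 2 < ν)
    (hA3 : (fun m : ℕ => alphaMix P X m) =O[atTop] fun m : ℕ => (m : ℝ) ^ (-ν))
    -- (A4)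
    (hA4 : ∃ L : NNReal, LipschitzOnWith L f (Sd d))
    -- (A5)
    (b : ℕ → ℝ) (hbpos : ∀ n, 0 < b n)
    (hA5a : Tendsto b atTop (𝓝 0))
    (hA5b : Tendsto (fun n : ℕ => (n : ℝ) * (b n) ^ ((d : ℝ) / 2)) atTop atTop)
    (hA5c : Tendsto (fun n : ℕ => (n : ℝ) ^ ((1 : ℝ) / 2) * (b n) ^ ((d : ℝ) / 4 + 1 / 2))
      atTop (𝓝 0))
    (s : Fin d → ℝ) (hs : s ∈ SdInt d)
    -- blocking sequences
    (pn qn : ℕ → ℕ) (hpn : Tendsto pn atTop atTop) (hqn : Tendsto qn atTop atTop)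
    (hkn : Tendsto (fun n : ℕ => n / (pn n + qn n)) atTop atTop)
    -- (a) k_n q_n / n → 0
    (ha : Tendsto (fun n : ℕ => ((n / (pn n + qn n) : ℕ) : ℝ) * (qn n : ℝ) / (n : ℝ))
      atTop (𝓝 0))
    -- (b) p_n/(p_n+q_n) → 1
    (hb' : Tendsto (fun n : ℕ => (pn n : ℝ) / ((pn n : ℝ) + (qn n : ℝ))) atTop (𝓝 1))
    -- (c) k_n q_n² n⁻¹ b^{-d/2} / (p_n+q_n)^ν → 0
    (hc : Tendsto (fun n : ℕ => ((n / (pn n + qn n) : ℕ) : ℝ) * (qn n : ℝ) ^ 2 *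
        (n : ℝ)⁻¹ * (b n) ^ (-(d : ℝ) / 2) / ((pn n : ℝ) + (qn n : ℝ)) ^ ν)
      atTop (𝓝 0))
    -- (d) k_n / q_n^ν → 0
    (hd' : Tendsto (fun n : ℕ => ((n / (pn n + qn n) : ℕ) : ℝ) / (qn n : ℝ) ^ ν)
      atTop (𝓝 0))
    -- (e) p_n / (n^{1/2} b^{d/4}) → 0
    (he : Tendsto (fun n : ℕ =>
        (pn n : ℝ) / ((n : ℝ) ^ ((1 : ℝ) / 2) * (b n) ^ ((d : ℝ) / 4))) atTop (𝓝 0)) :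
    ∀ g : BoundedContinuousFunction ℝ ℝ,
      Tendsto (fun n : ℕ =>
          ∫ ω, g ((n : ℝ) ^ (-(1 : ℝ) / 2) * (b n) ^ ((d : ℝ) / 4) *
            ∑ j ∈ Finset.Icc 1 (n / (pn n + qn n)),
              ∑ i ∈ bigBlock (pn n) (qn n) j, Xi P X s (b n) i ω) ∂P)
        atTop
        (𝓝 (∫ x, g x ∂(ProbabilityTheory.gaussianReal 0
          (Real.toNNReal (psiFun d s * f s))))) := by
  intro g
  have H : BB.Setup P X f := ⟨hmeas, hval, hlaw, hsupp, hA4⟩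
  have hb0 : Tendsto b atTop (𝓝[>] 0) :=
    tendsto_nhdsWithin_iff.2 ⟨hA5a, Eventually.of_forall hbpos⟩
  have hν0 : 0 < ν := lt_trans (by positivity) hν'
  set k : ℕ → ℕ := fun n => n / (pn n + qn n) with hk
  set a : ℕ → ℝ := fun n => (n : ℝ) ^ (-(1 : ℝ) / 2) * (b n) ^ ((d : ℝ) / 4) with hadef
  set v : ℝ := psiFun d s * max (f s) 0 with hv
  set S : ℕ → Ω → ℝ := fun n ω => a n * ∑ j ∈ Finset.range (k n), BB.blk P X s (b n) (pn n) (j * (pn n + qn n)) ω with hS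
  have hSm : ∀ n, Measurable (S n) := fun n =>
    (Finset.measurable_fun_sum _ fun j _ => H.blk_meas _ _ _).const_mul _
  -- characteristic functions
  have hchar : ∀ t : ℝ, Tendsto (fun n => ∫ ω, Complex.exp ((t * S n ω : ℝ) * Complex.I) ∂P) atTop
      (𝓝 (Complex.exp (-(v * t ^ 2 / 2 : ℝ)))) := by
    intro t
    obtain ⟨C, hC, hbd⟩ := H.Xi_bdd hs
    obtain ⟨r, hr, hvar⟩ := H.block_var hd hs hp hA2 hν hA3
    have hbd' := hb0.eventually hbd
    have hvar' := hb0.eventually hvar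
    have hr' := hr.comp hb0
    have hkp := BB.kp_lim hkn hb'
    have ha2 : ∀ n : ℕ, a n ^ 2 = (n : ℝ)⁻¹ * (b n) ^ ((d : ℝ) / 2) := by
      intro n
      simp only [hadef]
      rw [mul_pow, ← Real.rpow_natCast, ← Real.rpow_natCast, ← Real.rpow_mul (Nat.cast_nonneg n),
        ← Real.rpow_mul (hbpos n).le, ← Real.rpow_neg_one]
      congr 2 <;> push_cast <;> ring
    have hlim := BB.char_lim P (Y := fun n ω => a n * BB.blk P X s (b n) (pn n) 0 ω)
      (fun n => (H.blk_meas _ _ _).const_mul _)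
      (ε := fun n => C * ((pn n : ℝ) / ((n : ℝ) ^ ((1 : ℝ) / 2) * (b n) ^ ((d : ℝ) / 4))))
      (by simpa using he.const_mul C)
      (by
        filter_upwards [hbd'] with n hn ω
        have hbb := hbpos n
        have ha0 : 0 ≤ a n := by simp only [hadef]; positivity
        rw [abs_mul, abs_of_nonneg ha0]
        have h1 : |BB.blk P X s (b n) (pn n) 0 ω| ≤ pn n * (C * (b n) ^ (-(d:ℝ) / 2)) := by
          refine (Finset.abs_sum_le_sum_abs _ _).trans ?_
          refine (Finset.sum_le_card_nsmul _ _ _ fun i _ => (hn _ ω).1).trans ?_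
          simp
        refine (mul_le_mul_of_nonneg_left h1 ha0).trans (le_of_eq ?_)
        simp only [hadef]
        have e1 : (b n) ^ (-(d:ℝ) / 2) = ((b n) ^ ((d:ℝ) / 4))⁻¹ * ((b n) ^ ((d:ℝ) / 4))⁻¹ := by
          rw [← Real.rpow_neg hbb.le, ← Real.rpow_add hbb]; congr 1; ring
        have e2 : (n:ℝ) ^ (-(1:ℝ) / 2) = ((n:ℝ) ^ ((1:ℝ) / 2))⁻¹ := by
          rw [← Real.rpow_neg (Nat.cast_nonneg n)]; congr 1; ring
        have : (b n) ^ ((d:ℝ) / 4) ≠ 0 := (Real.rpow_pos_of_pos hbb _).ne'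
        rw [e1, e2, div_eq_mul_inv (pn n : ℝ), mul_inv]
        calc _ = C * (pn n * (((n:ℝ) ^ ((1:ℝ) / 2))⁻¹ * ((b n) ^ ((d:ℝ) / 4))⁻¹)) *
              ((b n) ^ ((d:ℝ) / 4) * ((b n) ^ ((d:ℝ) / 4))⁻¹) := by ring
          _ = _ := by rw [mul_inv_cancel₀ this, mul_one])
      (by
        filter_upwards [hbd'] with n hn
        rw [integral_const_mul, H.blk_mean (fun i ω => (hn i ω).2), mul_zero])
      hkn (v := v)
      (by
        have hm : Tendsto (fun n : ℕ => ((k n : ℝ) * pn n / n) * v) atTop (𝓝 v) := by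
          simpa using hkp.mul_const v
        have hz : Tendsto (fun n : ℕ => ((k n : ℝ) * ∫ ω, (a n * BB.blk P X s (b n) (pn n) 0 ω) ^ 2 ∂P) -
            ((k n : ℝ) * pn n / n) * v) atTop (𝓝 0) := by
          have h0 : Tendsto (fun n : ℕ => ((k n : ℝ) * pn n / n) * r (b n)) atTop (𝓝 0) := by
            simpa using hkp.mul hr'
          refine squeeze_zero_norm' ?_ h0
          filter_upwards [hvar'] with n hn
          have hn := hn (pn n)
          have e : ∫ ω, (a n * BB.blk P X s (b n) (pn n) 0 ω) ^ 2 ∂P = (n:ℝ)⁻¹ * ((b n) ^ ((d:ℝ) / 2) *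
              ∫ ω, (∑ i ∈ Finset.range (pn n), Xi P X s (b n) (i + 1) ω) ^ 2 ∂P) := by
            simp only [mul_pow]
            rw [integral_const_mul, ha2, mul_assoc]
            rfl
          rw [e]
          have e3 : (k n : ℝ) * ((n:ℝ)⁻¹ * ((b n) ^ ((d:ℝ) / 2) *
              ∫ ω, (∑ i ∈ Finset.range (pn n), Xi P X s (b n) (i + 1) ω) ^ 2 ∂P)) - (k n : ℝ) * pn n / n * v
              = ((k n : ℝ) * (n:ℝ)⁻¹) * ((b n) ^ ((d:ℝ) / 2) *
              ∫ ω, (∑ i ∈ Finset.range (pn n), Xi P X s (b n) (i + 1) ω) ^ 2 ∂P - pn n * v) := by ring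
          rw [e3, norm_mul, Real.norm_of_nonneg (by positivity : (0:ℝ) ≤ (k n : ℝ) * (n:ℝ)⁻¹)]
          refine (mul_le_mul_of_nonneg_left hn (by positivity)).trans (le_of_eq (by ring))
        simpa using hz.add hm) t
    have hdiff : Tendsto (fun n => ∫ ω, Complex.exp ((t * S n ω : ℝ) * Complex.I) ∂P -
        (∫ ω, Complex.exp ((t * (a n * BB.blk P X s (b n) (pn n) 0 ω) : ℝ) * Complex.I) ∂P) ^ k n) atTop (𝓝 0) := by
      obtain ⟨Ca, hCa, hal⟩ := BB.alpha_pow P X hν0 hA3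
      have h0 : Tendsto (fun n => 16 * Ca * ((k n : ℝ) / (qn n : ℝ) ^ ν)) atTop (𝓝 0) := by
        simpa using hd'.const_mul (16 * Ca)
      refine squeeze_zero_norm' ?_ h0
      filter_upwards [hpn.eventually_ge_atTop 1, hqn.eventually_ge_atTop 1] with n hpn1 hqn1
      have hf := H.factor (s := s) hstat (b n) (t * a n) hpn1 (qn n) (k n)
      simp only [hS, ← mul_assoc]
      refine hf.trans ?_
      have hq0 : (0:ℝ) < qn n := by exact_mod_cast hqn1
      have h1 : alphaMix P X (qn n + 1) ≤ Ca * ((qn n : ℝ) ^ ν)⁻¹ := by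
        refine (hal _ (by omega)).trans ?_
        rw [← Real.rpow_neg hq0.le]
        refine mul_le_mul_of_nonneg_left ?_ hCa.le
        exact Real.rpow_le_rpow_of_nonpos hq0 (by push_cast; linarith) (by linarith)
      calc (k n : ℝ) * (16 * alphaMix P X (qn n + 1)) ≤ k n * (16 * (Ca * ((qn n : ℝ) ^ ν)⁻¹)) := by gcongr
        _ = _ := by rw [div_eq_mul_inv]; ring
    have := hdiff.add hlim
    rw [zero_add] at this
    refine this.congr fun n => by ring
  have hψ : 0 ≤ psiFun d s := by
    unfold psiFun
    have h1 := (BB.s0_pos hs).le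
    have h2 : ∀ i, 0 ≤ s i := fun i => (BB.s_pos hs i).le
    have h3 : 0 ≤ ∏ i, (s i) ^ ((1 : ℝ) / 2) := Finset.prod_nonneg fun i _ => Real.rpow_nonneg (h2 i) _
    positivity
  have hvv : ((Real.toNNReal (psiFun d s * f s) : NNReal) : ℝ) = v := by
    rw [Real.coe_toNNReal', hv, mul_max_of_nonneg _ _ hψ, mul_zero]
  let μ : ℕ → ProbabilityMeasure ℝ := fun n =>
    ⟨Measure.map (S n) P, Measure.isProbabilityMeasure_map (hSm n).aemeasurable⟩
  let μ₀ : ProbabilityMeasure ℝ :=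
    ⟨ProbabilityTheory.gaussianReal 0 (Real.toNNReal (psiFun d s * f s)), inferInstance⟩
  have hconv : Tendsto μ atTop (𝓝 μ₀) := by
    refine ProbabilityMeasure.tendsto_iff_tendsto_charFun.2 fun t => ?_
    have e0 : charFun (μ₀ : Measure ℝ) t = Complex.exp (-(v * t ^ 2 / 2 : ℝ)) := by
      change charFun (ProbabilityTheory.gaussianReal 0 (Real.toNNReal (psiFun d s * f s))) t = _
      rw [ProbabilityTheory.charFun_gaussianReal]
      congr 1
      have : (((Real.toNNReal (psiFun d s * f s) : NNReal) : ℝ) : ℂ) = (v : ℂ) := by rw [hvv]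
      rw [this]
      push_cast
      ring
    rw [e0]
    refine (hchar t).congr fun n => ?_
    change _ = charFun (Measure.map (S n) P) t
    rw [charFun_apply_real, integral_map (hSm n).aemeasurable (by fun_prop)]
    refine integral_congr_ae (ae_of_all _ fun ω => ?_)
    push_cast
    rfl
  have hfin := ProbabilityMeasure.tendsto_iff_forall_integral_tendsto.1 hconv g
  refine hfin.congr fun n => ?_
  change ∫ x, g x ∂(Measure.map (S n) P) = _
  rw [integral_map (hSm n).aemeasurable g.continuous.measurable.aestronglyMeasurable]
  refine integral_congr_ae (ae_of_all _ fun ω => ?_)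
  simp only [hS, hadef, hk]
  rw [BB.sum_big]
  rfl
end

section
/- Let d ∈ ℕ and let f : S_d → ℝ be twice continuously differentiable on S_d, with a unique maximizer s₀ ∈ Int(S_d) at which the gradient ∇f(s₀) vanishes. Let g : S_d → ℝ attain its supremum at some ŝ ∈ S_d, and suppose there exists λ > 0 such that, at every point t on the line segment joining s₀ and ŝ, the Hessian satisfies −∇²f(t) ⪰ λ I (i.e., all eigenvalues of −∇²f(t) are at least λ). Then ‖ŝ − s₀‖₂² ≤ (4/λ) · sup_{t ∈ S_d} |g(t) − f(t)|. -/
open MeasureTheory Filter Asymptotics Real Topology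

theorem SdInt_isOpen (d : ℕ) : IsOpen (SdInt d) := by
  have h : SdInt d = (⋂ i, {s : Fin d → ℝ | s i ∈ Set.Ioo (0 : ℝ) 1}) ∩ {s | ∑ i, |s i| < 1} := by
    ext s; simp [SdInt]
  rw [h]
  refine IsOpen.inter (isOpen_iInter_of_finite fun i => ?_) ?_
  · exact isOpen_Ioo.preimage (continuous_apply i)
  · exact isOpen_lt (by fun_prop) continuous_const

theorem SdInt_subset (d : ℕ) : SdInt d ⊆ Sd d := fun _ hs =>
  ⟨fun i => Set.Ioo_subset_Icc_self (hs.1 i), hs.2.le⟩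

theorem SdInt_seg (d : ℕ) {a b : Fin d → ℝ} (ha : a ∈ SdInt d) (hb : b ∈ Sd d)
    {t : ℝ} (h0 : 0 ≤ t) (h1 : t < 1) : a + t • (b - a) ∈ SdInt d := by
  have key : ∀ i, (a + t • (b - a)) i = (1 - t) * a i + t * b i := by
    intro i; simp; ring
  have h1' : 0 < 1 - t := by linarith
  constructor
  · intro i
    rw [key]
    obtain ⟨h2, h3⟩ := ha.1 i
    obtain ⟨h4, h5⟩ := hb.1 i
    constructor
    · have := mul_pos h1' h2
      have := mul_nonneg h0 h4
      linarith
    · nlinarith [mul_lt_mul_of_pos_left h3 h1', mul_le_mul_of_nonneg_left h5 h0]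
  · have : ∑ i, |(a + t • (b - a)) i| ≤ (1 - t) * ∑ i, |a i| + t * ∑ i, |b i| := by
      rw [Finset.mul_sum, Finset.mul_sum, ← Finset.sum_add_distrib]
      refine Finset.sum_le_sum fun i _ => ?_
      rw [key]
      refine (abs_add_le _ _).trans ?_
      rw [abs_mul, abs_mul, abs_of_pos h1', abs_of_nonneg h0]
    nlinarith [mul_lt_mul_of_pos_left ha.2 h1', mul_le_mul_of_nonneg_left hb.2 h0]

/-- Quadratic localization of the mode estimator. -/
theorem mode_estimator_localization (d : ℕ) (hd : 1 ≤ d)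
    (f g : (Fin d → ℝ) → ℝ)
    (hf : ContDiffOn ℝ 2 f (Sd d))
    (s0 : Fin d → ℝ) (hs0 : s0 ∈ SdInt d)
    -- s0 is the unique maximizer of f on S_d
    (hmaxf : ∀ t ∈ Sd d, t ≠ s0 → f t < f s0)
    -- the gradient of f vanishes at s0
    (hgrad : fderiv ℝ f s0 = 0)
    (shat : Fin d → ℝ) (hshat : shat ∈ Sd d)
    -- shat maximizes g on S_d
    (hmaxg : ∀ t ∈ Sd d, g t ≤ g shat)
    (lam : ℝ) (hlam : 0 < lam)
    -- −∇²f(t) ⪰ λI at every point of the segment joining s0 and shat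
    (hHess : ∀ t ∈ segment ℝ s0 shat, ∀ v : Fin d → ℝ,
      fderiv ℝ (fun y => fderiv ℝ f y v) t v ≤ -lam * ∑ i, (v i) ^ 2) :
    ∀ M : ℝ, (∀ t ∈ Sd d, |g t - f t| ≤ M) →
      ∑ i, (shat i - s0 i) ^ 2 ≤ (4 / lam) * M := by
  intro M hM
  set v := shat - s0 with hv
  set L := lam * ∑ i, (v i) ^ 2 with hL
  have hs0S := SdInt_subset d hs0
  have hend : s0 + (1 : ℝ) • v = shat := by simp [hv]
  have hmem : ∀ t ∈ Set.Ico (0 : ℝ) 1, s0 + t • v ∈ SdInt d :=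
    fun t ht => SdInt_seg d hs0 hshat ht.1 ht.2
  have hmemS : ∀ t ∈ Set.Icc (0 : ℝ) 1, s0 + t • v ∈ Sd d := by
    intro t ht
    rcases eq_or_lt_of_le ht.2 with h | h
    · rw [h, hend]; exact hshat
    · exact SdInt_subset d (hmem t ⟨ht.1, h⟩)
  have hCD : ∀ x ∈ SdInt d, ContDiffAt ℝ 2 f x := fun x hx =>
    hf.contDiffAt (Filter.mem_of_superset ((SdInt_isOpen d).mem_nhds hx) (SdInt_subset d))
  have hline : ∀ t : ℝ, HasDerivAt (fun t : ℝ => s0 + t • v) v t := by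
    intro t
    simpa using ((hasDerivAt_id t).smul_const v).const_add s0
  have hd1 : ∀ t ∈ Set.Ico (0 : ℝ) 1,
      HasDerivAt (fun t : ℝ => f (s0 + t • v)) (fderiv ℝ f (s0 + t • v) v) t := by
    intro t ht
    have h1 := ((hCD _ (hmem t ht)).differentiableAt (by norm_num)).hasFDerivAt
    exact h1.comp_hasDerivAt t (hline t)
  have hd2 : ∀ t ∈ Set.Ico (0 : ℝ) 1,
      HasDerivAt (fun t : ℝ => fderiv ℝ f (s0 + t • v) v)
        (fderiv ℝ (fun y => fderiv ℝ f y v) (s0 + t • v) v) t := by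
    intro t ht
    have h0 : ContDiffAt ℝ 1 (fderiv ℝ f) (s0 + t • v) :=
      (hCD _ (hmem t ht)).fderiv_right (by norm_num)
    have h1 : DifferentiableAt ℝ (fun y => fderiv ℝ f y v) (s0 + t • v) :=
      (h0.differentiableAt (by norm_num)).clm_apply (differentiableAt_const v)
    exact h1.hasFDerivAt.comp_hasDerivAt t (hline t)
  have hD1 : ∀ t ∈ Set.Ico (0 : ℝ) 1, HasDerivAt
      (fun t : ℝ => f (s0 + t • v) + L / 2 * t ^ 2) (fderiv ℝ f (s0 + t • v) v + L * t) t := by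
    intro t ht
    have := (hd1 t ht).add (((hasDerivAt_id t).pow 2).const_mul (L / 2))
    refine HasDerivAt.congr_deriv (f := fun t : ℝ => f (s0 + t • v) + L / 2 * t ^ 2) this ?_
    simp only [id]
    push_cast
    ring
  have hD2 : ∀ t ∈ Set.Ico (0 : ℝ) 1, HasDerivAt
      (fun t : ℝ => fderiv ℝ f (s0 + t • v) v + L * t)
      (fderiv ℝ (fun y => fderiv ℝ f y v) (s0 + t • v) v + L) t := by
    intro t ht
    have := (hd2 t ht).add ((hasDerivAt_id t).const_mul L)
    exact HasDerivAt.congr_deriv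
      (f := fun t : ℝ => fderiv ℝ f (s0 + t • v) v + L * t) this (by simp)
  have hanti1 : AntitoneOn (fun t : ℝ => fderiv ℝ f (s0 + t • v) v + L * t) (Set.Ico 0 1) := by
    refine antitoneOn_of_deriv_nonpos (convex_Ico 0 1)
      (fun t ht => (hD2 t ht).continuousAt.continuousWithinAt)
      (fun t ht => (hD2 t (interior_subset ht)).differentiableAt.differentiableWithinAt) ?_
    intro t ht
    have ht' := interior_subset ht
    rw [(hD2 t ht').deriv]
    have hseg : s0 + t • v ∈ segment ℝ s0 shat := by
      rw [segment_eq_image']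
      exact ⟨t, ⟨ht'.1, ht'.2.le⟩, rfl⟩
    have := hHess _ hseg v
    linarith
  have hneg : ∀ t ∈ Set.Ico (0 : ℝ) 1, fderiv ℝ f (s0 + t • v) v + L * t ≤ 0 := by
    intro t ht
    have := hanti1 (Set.left_mem_Ico.2 one_pos) ht ht.1
    simpa [hgrad] using this
  have hcont : ContinuousOn (fun t : ℝ => f (s0 + t • v) + L / 2 * t ^ 2) (Set.Icc 0 1) := by
    refine ContinuousOn.add ?_ (by fun_prop)
    exact hf.continuousOn.comp (by fun_prop) hmemS
  have hanti : AntitoneOn (fun t : ℝ => f (s0 + t • v) + L / 2 * t ^ 2) (Set.Icc 0 1) := by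
    refine antitoneOn_of_deriv_nonpos (convex_Icc 0 1) hcont ?_ ?_ <;> rw [interior_Icc]
    · exact fun t ht => (hD1 t ⟨ht.1.le, ht.2⟩).differentiableAt.differentiableWithinAt
    · intro t ht
      rw [(hD1 t ⟨ht.1.le, ht.2⟩).deriv]
      exact hneg t ⟨ht.1.le, ht.2⟩
  have hfin : f shat + L / 2 ≤ f s0 := by
    have := hanti (Set.left_mem_Icc.2 zero_le_one) (Set.right_mem_Icc.2 zero_le_one) zero_le_one
    simp only [hend] at this
    simpa using this
  have e1 := abs_le.1 (hM _ hs0S)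
  have e2 := abs_le.1 (hM _ hshat)
  have e3 := hmaxg _ hs0S
  have hfinal : L ≤ 4 * M := by linarith [e1.1, e2.2]
  have hgoal : ∑ i, (v i) ^ 2 ≤ 4 / lam * M := by
    rw [div_mul_eq_mul_div, le_div_iff₀ hlam]
    linarith
  simpa [hv] using hgoal
end
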